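/- arXiv:1711.00180 — 3 statements merged into one kernel-verified Lean document; each statement's English description precedes it below -/
import Mathlib

section
/- Under the standing assumptions, assume further x ≤ 80, and let d be a divisor of m with d ≥ 173. Then log ∏_{p} (1 + 1/(p − 1)) < 3.3·log log d / φ(d), where the product (taken in the real numbers) runs over the odd primes p with p ∤ x₁·y₁ and ℓ_p = d. -/
/-- `ellp a b p` is the least positive integer `ℓ` such that `p ∣ a ^ ℓ - b ^ ℓ`
(and `0` if no such integer exists). -/
noncomputable def ellp (a b p : ℕ) : ℕ := sInf {ℓ : ℕ | 0 < ℓ ∧ p ∣ a ^ ℓ - b ^ ℓ}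

/-!
For `b < a ≤ 80`, a prime `p ∤ a * b` with `ellp a b p = d` divides `a ^ d - b ^ d`, and `d` is the
order of `a / b` modulo `p`, so `p = k * d + 1` for some multiplier `k`. Since
`log (1 + 1 / (p - 1)) ≤ 1 / (k * d)`, it suffices to bound `∑ 1 / k` by
`3.3 * log (log d) * d / φ d`, which is done by partial summation from bounds for the number `A K`
of multipliers `k ≤ K`.

* A parity argument gives `A K ≤ d / φ d * K / 2`, which is used up to `K = 2 ^ 16`.
* For `2 ^ 16 ≤ K < d`, Selberg's sieve with primes up to `z = ⌊(K + 1) ^ (1 / 3)⌋` gives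
  `A K ≤ d / φ d * K / log (z + 1) + z ^ 2`, hence `A K ≤ 3.3 * d / φ d * K / log (K + 1)`: the main
  term contributes `3` to the constant, and the error `z ^ 2` at most `0.3`.
* The product of all these primes divides `a ^ d - b ^ d`, and each is larger than `d`, so their
  number is at most `d * log 80 / log d ≤ 4.4 * d / log d`, which controls the boundary term.
-/

section SelbergSieve

open Finset ArithmeticFunction BoundingSieve
open scoped ArithmeticFunction.Moebius

theorem sum_divisors_filter_dvd_moebius {e n : ℕ} (hn : Squarefree n) (he : e ∣ n) :
    ∑ l ∈ n.divisors with e ∣ l, (μ l : ℝ) = if n = e then (μ e : ℝ) else 0 := by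
  obtain ⟨t, rfl⟩ := he
  obtain ⟨he₀, ht₀⟩ := mul_ne_zero_iff.1 hn.ne_zero
  have hcop : e.Coprime t := Nat.coprime_of_squarefree_mul hn
  have himage : {l ∈ (e * t).divisors | e ∣ l} = t.divisors.image (e * ·) := by
    ext l
    simp only [mem_filter, Nat.mem_divisors, mem_image]
    constructor
    · rintro ⟨⟨h, -⟩, s, rfl⟩
      exact ⟨s, ⟨Nat.dvd_of_mul_dvd_mul_left he₀.pos h, ht₀⟩, rfl⟩
    · rintro ⟨s, ⟨h, -⟩, rfl⟩
      exact ⟨⟨mul_dvd_mul_left e h, hn.ne_zero⟩, dvd_mul_right _ _⟩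
  calc ∑ l ∈ e * t |>.divisors with e ∣ l, (μ l : ℝ)
      = ∑ s ∈ t.divisors, (μ (e * s) : ℝ) := by
        rw [himage, sum_image fun a _ b _ h ↦ Nat.eq_of_mul_eq_mul_left he₀.pos h]
    _ = ∑ s ∈ t.divisors, (μ e : ℝ) * μ s := sum_congr rfl fun s hs ↦ by
        rw [isMultiplicative_moebius.map_mul_of_coprime
          (hcop.coprime_dvd_right (Nat.dvd_of_mem_divisors hs)), Int.cast_mul]
    _ = (μ e : ℝ) * if t = 1 then 1 else 0 := by
        rw [← mul_sum, ← Int.cast_sum, ← coe_mul_zeta_apply, moebius_mul_coe_zeta, one_apply]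
        split_ifs <;> simp
    _ = _ := by simp [he₀]

/-- The moduli carrying Selberg's weights: the divisors `l` of `P = s.prodPrimes` with `l² ≤ y`,
where `y = s.level`. -/
noncomputable def selbergSupport (s : SelbergSieve) : Finset ℕ :=
  {l ∈ s.prodPrimes.divisors | (l : ℝ) ^ 2 ≤ s.level}

/-- Selberg's sum `S = ∑ g(l)` over the moduli `l ∣ P`, `l² ≤ y`, where `g = s.selbergTerms`. Its
inverse is the main term of the upper bound. -/
noncomputable def selbergBoundingSum (s : SelbergSieve) : ℝ :=
  ∑ l ∈ selbergSupport s, s.selbergTerms l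

/-- Selberg's weights, which minimise the quadratic form `s.mainSum (lambdaSquared w)` among the
`w` supported on `selbergSupport s` with `w 1 = 1`. The inner sum makes them vanish off
`selbergSupport s`. -/
noncomputable def selbergWeight (s : SelbergSieve) (d : ℕ) : ℝ :=
  μ d / (s.nu d * selbergBoundingSum s) * ∑ l ∈ selbergSupport s with d ∣ l, s.selbergTerms l

variable (s : SelbergSieve)

variable {s} in
theorem mem_selbergSupport {l : ℕ} :
    l ∈ selbergSupport s ↔ l ∣ s.prodPrimes ∧ (l : ℝ) ^ 2 ≤ s.level := by
  simp [selbergSupport, prodPrimes_ne_zero]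

theorem one_mem_selbergSupport : 1 ∈ selbergSupport s :=
  mem_selbergSupport.2 ⟨one_dvd _, by simpa using s.one_le_level⟩

variable {s} in
theorem mem_selbergSupport_of_dvd {k l : ℕ} (hl : l ∈ selbergSupport s) (hkl : k ∣ l) :
    k ∈ selbergSupport s := by
  rw [mem_selbergSupport] at hl ⊢
  have hk : k ≤ l := Nat.le_of_dvd (squarefree_of_dvd_prodPrimes hl.1).ne_zero.pos hkl
  exact ⟨hkl.trans hl.1, le_trans (by gcongr) hl.2⟩

theorem card_selbergSupport_le : (#(selbergSupport s) : ℝ) ≤ √s.level := by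
  have hsub : selbergSupport s ⊆ Icc 1 ⌊√s.level⌋₊ := fun l hl ↦ by
    obtain ⟨hlP, hle⟩ := mem_selbergSupport.1 hl
    exact mem_Icc.2 ⟨(squarefree_of_dvd_prodPrimes hlP).ne_zero.pos,
      Nat.le_floor (Real.le_sqrt_of_sq_le hle)⟩
  calc (#(selbergSupport s) : ℝ) ≤ ⌊√s.level⌋₊ := mod_cast (card_le_card hsub).trans_eq (by simp)
    _ ≤ √s.level := Nat.floor_le (Real.sqrt_nonneg _)

variable {s} in
theorem selbergTerms_pos_of_mem_selbergSupport {l : ℕ} (hl : l ∈ selbergSupport s) :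
    0 < s.selbergTerms l :=
  selbergTerms_pos (mem_selbergSupport.1 hl).1

theorem selbergBoundingSum_pos : 0 < selbergBoundingSum s :=
  sum_pos (fun _ ↦ selbergTerms_pos_of_mem_selbergSupport) ⟨1, one_mem_selbergSupport s⟩

theorem selbergWeight_one : selbergWeight s 1 = 1 := by
  have hS : (selbergBoundingSum s)⁻¹ * ∑ l ∈ selbergSupport s, s.selbergTerms l = 1 :=
    inv_mul_cancel₀ (selbergBoundingSum_pos s).ne'
  simpa [selbergWeight, s.nu_mult.map_one] using hS

variable {s} in
theorem selbergWeight_eq_zero {d : ℕ} (hd : d ∉ selbergSupport s) : selbergWeight s d = 0 := by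
  rw [selbergWeight, filter_false_of_mem fun l hl hdl ↦ hd (mem_selbergSupport_of_dvd hl hdl),
    sum_empty, mul_zero]

theorem sum_nu_mul_selbergWeight (l : ℕ) :
    ∑ d ∈ s.prodPrimes.divisors, (if l ∣ d then s.nu d * selbergWeight s d else 0) =
      if l ∈ selbergSupport s then μ l * s.selbergTerms l / selbergBoundingSum s else 0 := by
  have hexpand : ∀ d ∈ s.prodPrimes.divisors, s.nu d * selbergWeight s d =
        ∑ k ∈ selbergSupport s,
          if d ∣ k then μ d * s.selbergTerms k / selbergBoundingSum s else 0 := by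
    intro d hd
    have hν : s.nu d ≠ 0 := nu_ne_zero (Nat.dvd_of_mem_divisors hd)
    rw [← sum_filter, selbergWeight, mul_sum, mul_sum]
    refine sum_congr rfl fun k _ ↦ ?_
    field_simp
  have hinner : ∀ k ∈ selbergSupport s, ∑ d ∈ s.prodPrimes.divisors with l ∣ d,
      (if d ∣ k then μ d * s.selbergTerms k / selbergBoundingSum s else 0) =
        if k = l then μ l * s.selbergTerms l / selbergBoundingSum s else 0 := by
    intro k hk
    have hkP := (mem_selbergSupport.1 hk).1
    rw [← sum_filter, filter_comm, Nat.divisors_filter_dvd_of_dvd prodPrimes_ne_zero hkP]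
    simp_rw [mul_div_assoc]
    rw [← sum_mul]
    by_cases hlk : l ∣ k
    · rw [sum_divisors_filter_dvd_moebius (squarefree_of_dvd_prodPrimes hkP) hlk]
      split_ifs with h
      · rw [h]
      · rw [zero_mul]
    · rw [filter_false_of_mem fun d hd hld ↦ hlk (hld.trans (Nat.dvd_of_mem_divisors hd)),
        sum_empty, zero_mul, if_neg (by rintro rfl; exact hlk dvd_rfl)]
  rw [← sum_filter, sum_congr rfl fun d hd ↦ hexpand d (mem_filter.1 hd).1, sum_comm,
    sum_congr rfl hinner, sum_ite_eq']

theorem mainSum_lambdaSquared_selbergWeight :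
    s.mainSum (lambdaSquared (selbergWeight s)) = (selbergBoundingSum s)⁻¹ := by
  have hterm : ∀ l ∈ selbergSupport s, (s.selbergTerms l)⁻¹ *
      (μ l * s.selbergTerms l / selbergBoundingSum s) ^ 2 =
        s.selbergTerms l / selbergBoundingSum s ^ 2 := by
    intro l hl
    have hg := (selbergTerms_pos_of_mem_selbergSupport hl).ne'
    have hμ : (μ l : ℝ) ^ 2 = 1 := mod_cast
      moebius_sq_eq_one_of_squarefree (squarefree_of_dvd_prodPrimes (mem_selbergSupport.1 hl).1)
    have hS := (selbergBoundingSum_pos s).ne'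
    field_simp
    exact hμ
  have hsub : selbergSupport s ⊆ s.prodPrimes.divisors := filter_subset _ _
  rw [mainSum_lambdaSquared_eq_sum_mul_sum_sq]
  simp_rw [sum_nu_mul_selbergWeight]
  rw [← sum_subset hsub fun l _ hl ↦ by simp [hl]]
  rw [sum_congr rfl fun l hl ↦ by rw [if_pos hl, hterm l hl], ← sum_div, ← selbergBoundingSum]
  have hS := (selbergBoundingSum_pos s).ne'
  field_simp

theorem injOn_mul_div_divisors_product {d : ℕ} {F : Finset ℕ} (hd : 0 < d)
    (hF : ∀ l ∈ F, Squarefree l ∧ d ∣ l) :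
    Set.InjOn (fun kl : ℕ × ℕ ↦ kl.1 * (kl.2 / d)) (d.divisors ×ˢ F : Finset (ℕ × ℕ)) := by
  rintro ⟨k, l⟩ hkl ⟨k', l'⟩ hkl' heq
  simp only [coe_product, Set.mem_prod, mem_coe] at hkl hkl'
  obtain ⟨hl, t, rfl⟩ := hF l hkl.2
  obtain ⟨hl', t', rfl⟩ := hF l' hkl'.2
  simp only [Nat.mul_div_cancel_left _ hd] at heq
  have hgcd {k t : ℕ} (hk : k ∈ d.divisors) (ht : Squarefree (d * t)) : (k * t).gcd d = k := by
    rw [(Nat.coprime_of_squarefree_mul ht).symm.gcd_mul_right_cancel,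
      Nat.gcd_eq_left (Nat.dvd_of_mem_divisors hk)]
  obtain rfl : k = k' := by rw [← hgcd hkl.1 hl, heq, hgcd hkl'.1 hl']
  rw [Nat.eq_of_mul_eq_mul_left (Nat.pos_of_mem_divisors hkl.1) heq]

theorem inv_nu_mul_sum_selbergTerms_le {d : ℕ} (hd : d ∈ selbergSupport s) :
    (s.nu d)⁻¹ * ∑ l ∈ selbergSupport s with d ∣ l, s.selbergTerms l ≤ selbergBoundingSum s := by
  have hdP := (mem_selbergSupport.1 hd).1
  have hd₀ : 0 < d := (squarefree_of_dvd_prodPrimes hdP).ne_zero.pos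
  set F := {l ∈ selbergSupport s | d ∣ l}
  have hF : ∀ l ∈ F, Squarefree l ∧ d ∣ l := fun l hl ↦
    ⟨squarefree_of_dvd_prodPrimes (mem_selbergSupport.1 (mem_filter.1 hl).1).1,
      (mem_filter.1 hl).2⟩
  have hdivisors : ∑ k ∈ d.divisors, s.selbergTerms k = s.selbergTerms d * (s.nu d)⁻¹ := by
    rw [← sum_divisors_selbergTerms_eq_selbergTerms_mul_nu_inv hdP, ← sum_filter,
      Nat.divisors_filter_dvd_of_dvd prodPrimes_ne_zero hdP]
  calc (s.nu d)⁻¹ * ∑ l ∈ F, s.selbergTerms l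
      = ∑ kl ∈ d.divisors ×ˢ F, s.selbergTerms (kl.1 * (kl.2 / d)) := by
        rw [sum_product_right, mul_sum]
        refine sum_congr rfl fun l hl ↦ ?_
        obtain ⟨hsq, t, rfl⟩ := hF l hl
        have ht : d.Coprime t := Nat.coprime_of_squarefree_mul hsq
        have hmul : ∀ k ∈ d.divisors,
            s.selbergTerms (k * t) = s.selbergTerms k * s.selbergTerms t := fun k hk ↦
          (selbergTerms_isMultiplicative (s := s.toBoundingSieve)).map_mul_of_coprime
            (ht.coprime_dvd_left (Nat.dvd_of_mem_divisors hk))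
        simp only [Nat.mul_div_cancel_left _ hd₀]
        rw [sum_congr rfl hmul, ← sum_mul, hdivisors,
          hmul d (Nat.mem_divisors_self d hd₀.ne')]
        ring
    _ = ∑ e ∈ (d.divisors ×ˢ F).image (fun kl ↦ kl.1 * (kl.2 / d)), s.selbergTerms e :=
        (sum_image (injOn_mul_div_divisors_product hd₀ hF)).symm
    _ ≤ selbergBoundingSum s := by
        refine sum_le_sum_of_subset_of_nonneg (image_subset_iff.2 ?_)
          fun l hl _ ↦ (selbergTerms_pos_of_mem_selbergSupport hl).le
        rintro ⟨k, l⟩ hkl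
        obtain ⟨hk, hl⟩ := mem_product.1 hkl
        obtain ⟨hmem, t, rfl⟩ := mem_filter.1 hl
        rw [Nat.mul_div_cancel_left _ hd₀]
        exact mem_selbergSupport_of_dvd hmem (mul_dvd_mul_right (Nat.dvd_of_mem_divisors hk) t)

theorem abs_selbergWeight_le_one (d : ℕ) : |selbergWeight s d| ≤ 1 := by
  by_cases hd : d ∈ selbergSupport s
  swap
  · simp [selbergWeight_eq_zero hd]
  have hdP := (mem_selbergSupport.1 hd).1
  have hμ : |(μ d : ℝ)| = 1 := mod_cast
    abs_moebius_eq_one_of_squarefree (squarefree_of_dvd_prodPrimes hdP)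
  have hsum : 0 ≤ ∑ l ∈ selbergSupport s with d ∣ l, s.selbergTerms l := sum_nonneg fun l hl ↦
    (selbergTerms_pos_of_mem_selbergSupport (mem_filter.1 hl).1).le
  have hden : 0 < s.nu d * selbergBoundingSum s :=
    mul_pos (nu_pos_of_dvd_prodPrimes hdP) (selbergBoundingSum_pos s)
  rw [selbergWeight, abs_mul, abs_div, hμ, abs_of_pos hden, abs_of_nonneg hsum, one_div, mul_inv,
    mul_right_comm, ← div_eq_mul_inv, div_le_one (selbergBoundingSum_pos s)]
  exact inv_nu_mul_sum_selbergTerms_le s hd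

variable {s} in
theorem lambdaSquared_selbergWeight {d : ℕ} (hd : d ≠ 0) :
    lambdaSquared (selbergWeight s) d = ∑ d₁ ∈ selbergSupport s, ∑ d₂ ∈ selbergSupport s,
      if d = d₁.lcm d₂ then selbergWeight s d₁ * selbergWeight s d₂ else 0 := by
  rw [lambdaSquared, ← sum_product', ← sum_product']
  refine sum_congr_of_eq_on_inter ?_ ?_ fun _ _ _ ↦ rfl
  · rintro ⟨d₁, d₂⟩ - hnot
    rcases not_and_or.1 (mt mem_product.2 hnot) with h | h <;> simp [selbergWeight_eq_zero h]
  · rintro ⟨d₁, d₂⟩ - hnot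
    refine if_neg ?_
    rintro rfl
    simp [hd, Nat.dvd_lcm_left, Nat.dvd_lcm_right] at hnot

theorem errSum_lambdaSquared_selbergWeight_le :
    s.errSum (lambdaSquared (selbergWeight s)) ≤
      ∑ d₁ ∈ selbergSupport s, ∑ d₂ ∈ selbergSupport s, |s.rem (d₁.lcm d₂)| := by
  have habs : ∀ d ∈ s.prodPrimes.divisors, |lambdaSquared (selbergWeight s) d| * |s.rem d| ≤
      ∑ d₁ ∈ selbergSupport s, ∑ d₂ ∈ selbergSupport s,
        if d = d₁.lcm d₂ then |s.rem (d₁.lcm d₂)| else 0 := by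
    intro d hd
    rw [lambdaSquared_selbergWeight (Nat.pos_of_mem_divisors hd).ne', ← abs_mul, sum_mul]
    refine (abs_sum_le_sum_abs _ _).trans (sum_le_sum fun d₁ _ ↦ ?_)
    rw [sum_mul]
    refine (abs_sum_le_sum_abs _ _).trans (sum_le_sum fun d₂ _ ↦ ?_)
    split_ifs with h
    · rw [← h, abs_mul, abs_mul]
      exact mul_le_of_le_one_left (abs_nonneg _) (mul_le_one₀ (abs_selbergWeight_le_one s d₁)
        (abs_nonneg _) (abs_selbergWeight_le_one s d₂))
    · simp
  refine (sum_le_sum habs).trans_eq ?_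
  rw [sum_comm]
  refine sum_congr rfl fun d₁ h₁ ↦ ?_
  rw [sum_comm]
  refine sum_congr rfl fun d₂ h₂ ↦ ?_
  rw [sum_ite_eq', if_pos (Nat.mem_divisors.2 ⟨Nat.lcm_dvd ?_ ?_, prodPrimes_ne_zero⟩)]
  exacts [(mem_selbergSupport.1 h₁).1, (mem_selbergSupport.1 h₂).1]

theorem siftedSum_le_totalMass_div_selbergBoundingSum_add :
    s.siftedSum ≤ s.totalMass / selbergBoundingSum s +
      ∑ d₁ ∈ selbergSupport s, ∑ d₂ ∈ selbergSupport s, |s.rem (d₁.lcm d₂)| := by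
  have hupper := siftedSum_le_mainSum_errSum_of_upperMoebius (s := s.toBoundingSieve) _
    (upperMoebius_lambdaSquared _ (selbergWeight_one s))
  rw [mainSum_lambdaSquared_selbergWeight, ← div_eq_mul_inv] at hupper
  exact hupper.trans (add_le_add_right (errSum_lambdaSquared_selbergWeight_le s) _)

variable {s} in
theorem siftedSum_le_totalMass_div_selbergBoundingSum_add_level
    (hrem : ∀ l, l ∣ s.prodPrimes → |s.rem l| ≤ 1) :
    s.siftedSum ≤ s.totalMass / selbergBoundingSum s + s.level := by
  refine (siftedSum_le_totalMass_div_selbergBoundingSum_add s).trans (add_le_add_right ?_ _)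
  calc ∑ d₁ ∈ selbergSupport s, ∑ d₂ ∈ selbergSupport s, |s.rem (d₁.lcm d₂)|
      ≤ ∑ _d₁ ∈ selbergSupport s, ∑ _d₂ ∈ selbergSupport s, (1 : ℝ) := by
        refine sum_le_sum fun d₁ h₁ ↦ sum_le_sum fun d₂ h₂ ↦ hrem _ (Nat.lcm_dvd ?_ ?_)
        · exact (mem_selbergSupport.1 h₁).1
        · exact (mem_selbergSupport.1 h₂).1
    _ = (#(selbergSupport s) : ℝ) ^ 2 := by simp [sq]
    _ ≤ √s.level ^ 2 := by gcongr; exact card_selbergSupport_le s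
    _ = s.level := Real.sq_sqrt (zero_le_one.trans s.one_le_level)

end SelbergSieve

section HarmonicSum

open Finset Nat UniqueFactorizationMonoid

theorem prod_primeFactors_inv_one_sub_inv {n : ℕ} (hn : n ≠ 0) :
    ∏ p ∈ n.primeFactors, (1 - (p : ℝ)⁻¹)⁻¹ = n / φ n := by
  have htotient : (φ n : ℝ) = n * ∏ p ∈ n.primeFactors, (1 - (p : ℝ)⁻¹) := by
    simpa using congrArg (Rat.cast (K := ℝ)) (totient_eq_mul_prod_factors n)
  have hn' : (n : ℝ) ≠ 0 := mod_cast hn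
  rw [prod_inv_distrib, htotient, div_mul_cancel_left₀ hn']

theorem sum_inv_le_div_totient {m : ℕ} (hm : m ≠ 0) {F : Finset ℕ}
    (hF : ∀ n ∈ F, n ∈ factoredNumbers m.primeFactors) :
    ∑ n ∈ F, (n : ℝ)⁻¹ ≤ m / φ m := by
  let f : ℕ →* ℝ := ⟨⟨fun n ↦ (n : ℝ)⁻¹, by simp⟩, fun a b ↦ by simp [mul_comm]⟩
  have hf : ∀ {p : ℕ}, p.Prime → ‖f p‖ < 1 := fun {p} hp ↦ by
    simpa [f] using inv_lt_one_of_one_lt₀ (a := (p : ℝ)) (mod_cast hp.one_lt)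
  have heuler :=
    (EulerProduct.summable_and_hasSum_factoredNumbers_prod_filter_prime_geometric hf
      m.primeFactors).2
  rw [filter_true_of_mem fun p ↦ prime_of_mem_primeFactors] at heuler
  calc ∑ n ∈ F, (n : ℝ)⁻¹
      = ∑ n ∈ F.subtype (· ∈ factoredNumbers m.primeFactors), f n :=
        (sum_subtype_of_mem (fun n ↦ f n) hF).symm
    _ ≤ ∏ p ∈ m.primeFactors, (1 - f p)⁻¹ :=
        sum_le_hasSum _ (fun n _ ↦ by simp [f]) heuler
    _ = m / φ m := prod_primeFactors_inv_one_sub_inv hm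

theorem sum_inv_le_inv_mul_div_totient {e m : ℕ} (he : 0 < e) (hm : m ≠ 0) {F : Finset ℕ}
    (hF : ∀ n ∈ F, e ∣ n ∧ n ∈ factoredNumbers m.primeFactors) :
    ∑ n ∈ F, (n : ℝ)⁻¹ ≤ (e : ℝ)⁻¹ * (m / φ m) := by
  have hinj : Set.InjOn (· / e) (F : Set ℕ) := fun a ha b hb hab ↦
    (Nat.div_left_inj (hF a ha).1 (hF b hb).1).1 hab
  calc ∑ n ∈ F, (n : ℝ)⁻¹ = (e : ℝ)⁻¹ * ∑ k ∈ F.image (· / e), (k : ℝ)⁻¹ := by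
        rw [sum_image hinj, mul_sum]
        refine sum_congr rfl fun n hn ↦ ?_
        rw [← mul_inv, ← Nat.cast_mul, Nat.mul_div_cancel' (hF n hn).1]
    _ ≤ (e : ℝ)⁻¹ * (m / φ m) := by
        gcongr
        refine sum_inv_le_div_totient hm fun k hk ↦ ?_
        obtain ⟨n, hn, rfl⟩ := mem_image.1 hk
        exact mem_factoredNumbers_of_dvd (hF n hn).2 (Nat.div_dvd_of_dvd (hF n hn).1)

theorem harmonic_le_mul_sum_inv_totient {q : ℕ} (hq : q ≠ 0) (z : ℕ) :
    (harmonic z : ℝ) ≤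
      q / φ q * ∑ e ∈ Icc 1 z with Squarefree e ∧ e.Coprime q, (φ e : ℝ)⁻¹ := by
  -- Group the `n ≤ z` by the largest squarefree divisor of `n` prime to `q`.
  let r (n : ℕ) : ℕ := radical n / (radical n).gcd q
  have hr_dvd (n : ℕ) : r n ∣ n :=
    (Nat.div_dvd_of_dvd (Nat.gcd_dvd_left _ _)).trans radical_dvd_self
  have hr_mem : ∀ n ∈ Icc 1 z, r n ∈ {e ∈ Icc 1 z | Squarefree e ∧ e.Coprime q} := by
    intro n hn
    obtain ⟨hn₁, hnz⟩ := mem_Icc.1 hn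
    refine mem_filter.2 ⟨mem_Icc.2 ⟨Nat.pos_of_dvd_of_pos (hr_dvd n) hn₁,
      (Nat.le_of_dvd hn₁ (hr_dvd n)).trans hnz⟩, ?_, ?_⟩
    · exact squarefree_radical.squarefree_of_dvd (Nat.div_dvd_of_dvd (Nat.gcd_dvd_left _ _))
    · exact coprime_div_gcd_of_squarefree squarefree_radical hq
  have hfactored {n : ℕ} (hn : n ≠ 0) : n ∈ factoredNumbers (r n * q).primeFactors := by
    refine mem_factoredNumbers'.2 fun p hp hpn ↦ ?_
    have hrn : r n * (radical n).gcd q = radical n := Nat.div_mul_cancel (Nat.gcd_dvd_left _ _)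
    have hdvd : p ∣ r n * q := by
      have hprad : p ∣ radical n := (dvd_radical_iff_of_irreducible hp hn).2 hpn
      rw [← hrn] at hprad
      exact hprad.trans (mul_dvd_mul_left _ (Nat.gcd_dvd_right _ _))
    exact mem_primeFactors.2 ⟨hp, hdvd, mul_ne_zero (ne_zero_of_dvd_ne_zero hn (hr_dvd n)) hq⟩
  rw [harmonic_eq_sum_Icc, Rat.cast_sum, ← sum_fiberwise_of_maps_to hr_mem, mul_sum]
  refine sum_le_sum fun e he ↦ ?_
  obtain ⟨he, -, hcop⟩ := mem_filter.1 he
  have he₀ : 0 < e := (mem_Icc.1 he).1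
  calc ∑ n ∈ Icc 1 z with r n = e, (((n : ℚ)⁻¹ : ℚ) : ℝ) = ∑ n ∈ Icc 1 z with r n = e, (n : ℝ)⁻¹ :=
        by push_cast; rfl
    _ ≤ (e : ℝ)⁻¹ * ((e * q : ℕ) / φ (e * q)) := by
        refine sum_inv_le_inv_mul_div_totient he₀ (mul_ne_zero he₀.ne' hq) fun n hn ↦ ?_
        obtain ⟨hnz, rfl⟩ := mem_filter.1 hn
        exact ⟨hr_dvd n, hfactored (Nat.one_le_iff_ne_zero.1 (mem_Icc.1 hnz).1)⟩
    _ = q / φ q * (φ e : ℝ)⁻¹ := by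
        rw [totient_mul hcop]
        push_cast
        field_simp

end HarmonicSum

section BrunTitchmarsh

open Finset Nat ArithmeticFunction BoundingSieve
open scoped ArithmeticFunction.zeta

theorem abs_card_Ioc_filter_modEq_sub_le_one (x y v : ℕ) {r : ℕ} (hr : 0 < r) :
    |(#{n ∈ Ioc x (x + y) | n ≡ v [MOD r]} : ℝ) - y / r| ≤ 1 := by
  have hcard := Ioc_filter_modEq_card x (x + y) hr v
  set A : ℚ := ((x : ℚ) - v) / r
  have hr' : (0 : ℚ) < r := mod_cast hr
  have hB : (((x + y : ℕ) : ℚ) - v) / r = A + y / r := by simp only [A]; push_cast; ring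
  have hmono : ⌊A⌋ ≤ ⌊A + y / r⌋ := Int.floor_le_floor (le_add_of_nonneg_right (by positivity))
  rw [hB, max_eq_left (sub_nonneg.2 hmono)] at hcard
  have hcard' : (#{n ∈ Ioc x (x + y) | n ≡ v [MOD r]} : ℚ) = ⌊A + y / r⌋ - ⌊A⌋ := mod_cast hcard
  have habs : |(#{n ∈ Ioc x (x + y) | n ≡ v [MOD r]} : ℚ) - y / r| ≤ 1 := by
    rw [hcard', abs_le]
    constructor <;> linarith [Int.floor_le A, Int.lt_floor_add_one A, Int.floor_le (A + y / r),
      Int.lt_floor_add_one (A + y / r)]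
  have hcast := Rat.cast_le (K := ℝ) |>.2 habs
  push_cast at hcast
  exact hcast

/-- Selberg's sieve removing from the integers `n ≡ a [MOD q]` in `(x, x + y]` the multiples of the
primes up to `z` that do not divide `q`, with level `z ^ 2`. -/
noncomputable def modEqSieve (x y a q : ℕ) {z : ℕ} (hz : 1 ≤ z) : SelbergSieve where
  support := {n ∈ Ioc x (x + y) | n ≡ a [MOD q]}
  prodPrimes := primorial z / (primorial z).gcd q
  prodPrimes_squarefree :=
    (squarefree_primorial z).squarefree_of_dvd (Nat.div_dvd_of_dvd (Nat.gcd_dvd_left _ _))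
  weights := 1
  weights_nonneg := fun _ ↦ zero_le_one
  totalMass := y / q
  nu := (ζ : ArithmeticFunction ℝ).pdiv (ArithmeticFunction.id : ArithmeticFunction ℝ)
  nu_mult := isMultiplicative_zeta.natCast.pdiv isMultiplicative_id.natCast
  nu_pos_of_prime := fun p hp _ ↦ by simp [zeta_apply, hp.ne_zero, hp.pos]
  nu_lt_one_of_prime := fun p hp _ ↦ by
    simpa [zeta_apply, hp.ne_zero] using inv_lt_one_of_one_lt₀ (a := (p : ℝ)) (mod_cast hp.one_lt)
  level := (z : ℝ) ^ 2
  one_le_level := one_le_pow₀ (mod_cast hz)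

variable {x y a q z : ℕ} {hz : 1 ≤ z}

theorem modEqSieve_nu_apply (l : ℕ) : (modEqSieve x y a q hz).nu l = (l : ℝ)⁻¹ := by
  rcases eq_or_ne l 0 with rfl | hl <;> simp [modEqSieve, zeta_apply, *]

theorem dvd_modEqSieve_prodPrimes_iff (hq : q ≠ 0) {l : ℕ} :
    l ∣ (modEqSieve x y a q hz).prodPrimes ↔ l ∣ primorial z ∧ l.Coprime q := by
  change l ∣ primorial z / (primorial z).gcd q ↔ _
  constructor
  · intro hl
    exact ⟨hl.trans (Nat.div_dvd_of_dvd (Nat.gcd_dvd_left _ _)),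
      (coprime_div_gcd_of_squarefree (squarefree_primorial z) hq).coprime_dvd_left hl⟩
  · rintro ⟨hl, hlq⟩
    refine (hlq.coprime_dvd_right (Nat.gcd_dvd_right (primorial z) q)).dvd_of_dvd_mul_right ?_
    rwa [Nat.div_mul_cancel (Nat.gcd_dvd_left _ _)]

theorem selbergSupport_modEqSieve (hq : q ≠ 0) :
    selbergSupport (modEqSieve x y a q hz) = {e ∈ Icc 1 z | Squarefree e ∧ e.Coprime q} := by
  ext e
  rw [mem_selbergSupport, dvd_modEqSieve_prodPrimes_iff hq, mem_filter, mem_Icc]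
  have hlevel : (e : ℝ) ^ 2 ≤ (modEqSieve x y a q hz).level ↔ e ≤ z := by
    rw [show (modEqSieve x y a q hz).level = (z : ℝ) ^ 2 from rfl]
    norm_cast
    exact Nat.pow_le_pow_iff_left two_ne_zero
  rw [hlevel]
  constructor
  · rintro ⟨⟨he, hcop⟩, hez⟩
    have hsq := (squarefree_primorial z).squarefree_of_dvd he
    exact ⟨⟨hsq.ne_zero.pos, hez⟩, hsq, hcop⟩
  · rintro ⟨⟨-, hez⟩, hsq, hcop⟩
    exact ⟨⟨hsq.dvd_primorial.trans (primorial_dvd_primorial hez), hcop⟩, hez⟩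

theorem modEqSieve_selbergTerms_apply {l : ℕ} (hl : l ≠ 0) :
    (modEqSieve x y a q hz).selbergTerms l = (φ l : ℝ)⁻¹ := by
  have hl' : (l : ℝ) ≠ 0 := mod_cast hl
  rw [selbergTerms_apply]
  simp only [modEqSieve_nu_apply]
  rw [prod_primeFactors_inv_one_sub_inv hl]
  field_simp

theorem log_add_one_le_mul_selbergBoundingSum_modEqSieve (hq : q ≠ 0) :
    Real.log (z + 1) ≤ q / φ q * selbergBoundingSum (modEqSieve x y a q hz) := by
  have hharmonic := (log_add_one_le_harmonic z).trans (harmonic_le_mul_sum_inv_totient hq z)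
  push_cast at hharmonic
  refine hharmonic.trans_eq ?_
  rw [selbergBoundingSum, selbergSupport_modEqSieve hq]
  congr 1
  refine sum_congr rfl fun e he ↦ ?_
  have he₁ : 1 ≤ e := (mem_Icc.1 (mem_filter.1 he).1).1
  rw [modEqSieve_selbergTerms_apply (Nat.one_le_iff_ne_zero.1 he₁)]

theorem abs_modEqSieve_rem_le_one (hq : q ≠ 0) {l : ℕ}
    (hl : l ∣ (modEqSieve x y a q hz).prodPrimes) : |(modEqSieve x y a q hz).rem l| ≤ 1 := by
  have hcop : q.Coprime l := ((dvd_modEqSieve_prodPrimes_iff hq).1 hl).2.symm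
  have hl₀ : 0 < l := (squarefree_of_dvd_prodPrimes hl).ne_zero.pos
  obtain ⟨c, hcq, hcl⟩ := chineseRemainder hcop a 0
  have hiff (n : ℕ) : n ≡ a [MOD q] ∧ l ∣ n ↔ n ≡ c [MOD q * l] := by
    rw [← modEq_and_modEq_iff_modEq_mul hcop, ← modEq_zero_iff_dvd]
    exact and_congr ⟨(·.trans hcq.symm), (·.trans hcq)⟩ ⟨(·.trans hcl.symm), (·.trans hcl)⟩
  have hmult : (modEqSieve x y a q hz).multSum l =
      #{n ∈ Ioc x (x + y) | n ≡ c [MOD q * l]} := by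
    simp [modEqSieve, filter_filter, hiff]
  have hmass : (l : ℝ)⁻¹ * (modEqSieve x y a q hz).totalMass = y / (q * l : ℕ) := by
    rw [show (modEqSieve x y a q hz).totalMass = y / q from rfl]
    push_cast
    field_simp
  rw [rem, hmult, modEqSieve_nu_apply, hmass]
  exact abs_card_Ioc_filter_modEq_sub_le_one x y c (Nat.mul_pos hq.pos hl₀)

theorem card_primes_modEq_le_siftedSum (hzx : z ≤ x) :
    (#{p ∈ Ioc x (x + y) | p.Prime ∧ p ≡ a [MOD q]} : ℝ) ≤
      (modEqSieve x y a q hz).siftedSum := by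
  have hcop : ∀ p ∈ Ioc x (x + y), p.Prime →
      (primorial z / (primorial z).gcd q).Coprime p := fun p hp hprime ↦ by
    refine ((hprime.coprime_iff_not_dvd.2 fun hdvd ↦ ?_).symm).coprime_dvd_left
      (Nat.div_dvd_of_dvd (Nat.gcd_dvd_left _ _))
    exact ((mem_Ioc.1 hp).1.trans_le' hzx).not_ge (hprime.dvd_primorial_iff.1 hdvd)
  have hsifted : (modEqSieve x y a q hz).siftedSum =
      #{n ∈ Ioc x (x + y) | n ≡ a [MOD q] ∧ (primorial z / (primorial z).gcd q).Coprime n} := by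
    rw [← filter_filter, ← sum_boole]
    exact sum_congr rfl fun _ _ ↦ if_congr Iff.rfl rfl rfl
  rw [hsifted]
  norm_cast
  refine card_le_card fun p hp ↦ ?_
  obtain ⟨hpI, hprime, hmod⟩ := mem_filter.1 hp
  exact mem_filter.2 ⟨hpI, hmod, hcop p hpI hprime⟩

theorem card_primes_modEq_le (a y : ℕ) (hq : q ≠ 0) (hz : 1 ≤ z) (hzx : z ≤ x) :
    (#{p ∈ Ioc x (x + y) | p.Prime ∧ p ≡ a [MOD q]} : ℝ) ≤
      y / (φ q * Real.log (z + 1)) + z ^ 2 := by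
  have hlog : 0 < Real.log (z + 1) := Real.log_pos (by norm_cast; omega)
  have hφ : (0 : ℝ) < φ q := mod_cast totient_pos.2 hq.pos
  have hS := selbergBoundingSum_pos (modEqSieve x y a q hz)
  have hlogS := log_add_one_le_mul_selbergBoundingSum_modEqSieve (x := x) (y := y) (a := a)
    (hz := hz) hq
  have hden : φ q * Real.log (z + 1) ≤ q * selbergBoundingSum (modEqSieve x y a q hz) :=
    calc φ q * Real.log (z + 1)
        ≤ φ q * (q / φ q * selbergBoundingSum (modEqSieve x y a q hz)) :=
          mul_le_mul_of_nonneg_left hlogS hφ.le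
      _ = q * selbergBoundingSum (modEqSieve x y a q hz) := by field_simp
  calc (#{p ∈ Ioc x (x + y) | p.Prime ∧ p ≡ a [MOD q]} : ℝ)
      ≤ y / q / selbergBoundingSum (modEqSieve x y a q hz) + z ^ 2 :=
        (card_primes_modEq_le_siftedSum hzx).trans
          (siftedSum_le_totalMass_div_selbergBoundingSum_add_level (s := modEqSieve x y a q hz)
            fun l ↦ abs_modEqSieve_rem_le_one hq)
    _ ≤ y / (φ q * Real.log (z + 1)) + z ^ 2 := by
        rw [div_div]
        have hpos : 0 < φ q * Real.log (z + 1) := by positivity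
        gcongr (?_ : ℝ) + _
        exact div_le_div_of_nonneg_left (by positivity) hpos hden

end BrunTitchmarsh

section PrimeMultipliers

open Finset Nat

theorem one_le_div_totient {d : ℕ} (hd : d ≠ 0) : (1 : ℝ) ≤ d / φ d := by
  rw [one_le_div (mod_cast totient_pos.2 hd.pos)]
  exact_mod_cast totient_le d

theorem totient_two_mul_le (n : ℕ) : φ (2 * n) ≤ n := by
  induction n using Nat.strong_induction_on with
  | _ n ih =>
    rcases n.even_or_odd with heven | hodd
    · rcases n.eq_zero_or_pos with rfl | hn
      · simp
      · rw [totient_two_mul_of_even heven]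
        obtain ⟨m, rfl⟩ := heven
        rw [← two_mul]
        exact Nat.mul_le_mul_left 2 (ih m (by lia))
    · exact (totient_two_mul_of_odd hodd).trans_le (totient_le n)

theorem two_le_div_totient {d : ℕ} (hd : d ≠ 0) (heven : Even d) : (2 : ℝ) ≤ d / φ d := by
  rw [le_div_iff₀ (mod_cast totient_pos.2 hd.pos)]
  obtain ⟨m, rfl⟩ := even_iff_two_dvd.1 heven
  exact_mod_cast Nat.mul_le_mul_left 2 (totient_two_mul_le m)

/-- The multipliers `k ≤ K` of `d` for which `k * d + 1` is prime. -/
def primeMultipliers (d K : ℕ) : Finset ℕ := {k ∈ Ioc 0 K | (k * d + 1).Prime}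

theorem card_primeMultipliers_le_half_of_odd {d : ℕ} (hd : 2 ≤ d) (hodd : Odd d) (K : ℕ) :
    #(primeMultipliers d K) ≤ K / 2 := by
  rw [← Nat.Ioc_filter_dvd_card_eq_div]
  refine card_le_card fun k hk ↦ ?_
  obtain ⟨hkK, hprime⟩ := mem_filter.1 hk
  refine mem_filter.2 ⟨hkK, ?_⟩
  by_contra hk_odd
  have hk_odd : Odd k := by rwa [← not_even_iff_odd, even_iff_two_dvd]
  have htwo : k * d + 1 = 2 := hprime.even_iff.1 (hk_odd.mul hodd).add_one
  nlinarith [(mem_Ioc.1 hkK).1]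

theorem card_primeMultipliers_le_div_totient_mul_half {d : ℕ} (hd : 2 ≤ d) (K : ℕ) :
    (#(primeMultipliers d K) : ℝ) ≤ d / φ d * (K / 2) := by
  rcases d.even_or_odd with heven | hodd
  · calc (#(primeMultipliers d K) : ℝ) ≤ K := by
          simpa [primeMultipliers] using
            Nat.cast_le (α := ℝ).2 (card_filter_le (Ioc 0 K) fun k ↦ (k * d + 1).Prime)
      _ = 2 * (K / 2) := by ring
      _ ≤ d / φ d * (K / 2) := by gcongr; exact two_le_div_totient (by lia) heven
  · calc (#(primeMultipliers d K) : ℝ) ≤ (K / 2 : ℕ) :=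
          mod_cast card_primeMultipliers_le_half_of_odd hd hodd K
      _ ≤ K / 2 := Nat.cast_div_le
      _ ≤ d / φ d * (K / 2) :=
          le_mul_of_one_le_left (by positivity) (one_le_div_totient (by lia))

theorem card_primeMultipliers_le_card_primes_modEq {d : ℕ} (hd : d ≠ 0) (K : ℕ) :
    #(primeMultipliers d K) ≤ #{p ∈ Ioc d (d + K * d) | p.Prime ∧ p ≡ 1 [MOD d]} := by
  refine card_le_card_of_injOn (· * d + 1) (fun k hk ↦ ?_) fun k _ l _ hkl ↦ ?_
  · obtain ⟨hkK, hprime⟩ := mem_filter.1 hk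
    obtain ⟨hk₀, hkK⟩ := mem_Ioc.1 hkK
    refine mem_filter.2 ⟨mem_Ioc.2 ⟨?_, ?_⟩, hprime, ?_⟩
    · nlinarith [hd.pos]
    · nlinarith [hd.pos]
    · simp [Nat.ModEq]
  · exact Nat.eq_of_mul_eq_mul_right hd.pos (Nat.succ.inj hkl)

theorem card_primeMultipliers_le_div_log_add_sq {d : ℕ} (hd : d ≠ 0) (K : ℕ) {t : ℝ} (ht : 1 < t)
    (htd : t ≤ d) : (#(primeMultipliers d K) : ℝ) ≤ d / φ d * (K / Real.log t) + t ^ 2 := by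
  have hz : 1 ≤ ⌊t⌋₊ := (one_le_floor_iff _).2 ht.le
  have hzd : ⌊t⌋₊ ≤ d := floor_le_of_le htd
  have hlog : 0 < Real.log t := Real.log_pos ht
  calc (#(primeMultipliers d K) : ℝ)
      ≤ #{p ∈ Ioc d (d + K * d) | p.Prime ∧ p ≡ 1 [MOD d]} :=
        mod_cast card_primeMultipliers_le_card_primes_modEq hd K
    _ ≤ (K * d : ℕ) / (φ d * Real.log (⌊t⌋₊ + 1)) + (⌊t⌋₊ : ℝ) ^ 2 :=
        card_primes_modEq_le 1 (K * d) hd hz hzd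
    _ ≤ (K * d : ℕ) / (φ d * Real.log t) + t ^ 2 := by
        gcongr
        · exact (lt_floor_add_one t).le
        · exact floor_le (by linarith)
    _ = d / φ d * (K / Real.log t) + t ^ 2 := by push_cast; field_simp

theorem ten_mul_sq_mul_log_le {t : ℝ} (ht : 2 ^ 16 ≤ t ^ 3) (ht₀ : 0 ≤ t) :
    10 * t ^ 2 * Real.log t ≤ t ^ 3 - 1 := by
  have ht₄₀ : 40 ≤ t := by
    by_contra! hlt
    have := pow_lt_pow_left₀ hlt ht₀ three_ne_zero
    linarith
  have hlog₄₀ : 3 * Real.log 40 ≤ 16 * Real.log 2 := by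
    have := Real.log_le_log (by norm_num) (show (40 : ℝ) ^ 3 ≤ 2 ^ 16 by norm_num)
    simpa only [Real.log_pow, Nat.cast_ofNat] using this
  have htangent : Real.log t ≤ Real.log 40 + (t / 40 - 1) := by
    have := Real.log_le_sub_one_of_pos (show 0 < t / 40 by positivity)
    rw [Real.log_div (by positivity) (by norm_num)] at this
    linarith
  have hlin : 10 * Real.log t ≤ t - 1 := by linarith [Real.log_two_lt_d9]
  nlinarith [mul_le_mul_of_nonneg_left hlin (sq_nonneg t)]

theorem card_primeMultipliers_le_div_totient_mul_div_log {d K : ℕ} (hK : 2 ^ 16 ≤ K)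
    (hKd : K < d) :
    (#(primeMultipliers d K) : ℝ) ≤ d / φ d * (3.3 * K / Real.log (K + 1)) := by
  have hK' : (2 ^ 16 : ℝ) ≤ K := mod_cast hK
  set t : ℝ := (K + 1 : ℝ) ^ ((3 : ℕ) : ℝ)⁻¹
  have ht₀ : 0 ≤ t := by positivity
  have ht_cube : t ^ 3 = K + 1 := Real.rpow_inv_natCast_pow (by positivity) three_ne_zero
  have hten := ten_mul_sq_mul_log_le (by linarith) ht₀
  have ht₁ : 1 < t := (one_lt_pow_iff_of_nonneg ht₀ three_ne_zero).1 (by linarith)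
  have hlog : 0 < Real.log t := Real.log_pos ht₁
  have htd : t ≤ d := calc
    t ≤ t ^ 3 := le_self_pow₀ ht₁.le three_ne_zero
    _ ≤ d := by rw [ht_cube]; exact_mod_cast hKd
  have hlogK : Real.log (K + 1) = 3 * Real.log t := by rw [← ht_cube, Real.log_pow]; norm_num
  have hsq : t ^ 2 ≤ 0.3 * K / Real.log (K + 1) := by
    rw [le_div_iff₀ (by linarith), hlogK]
    linarith
  have hD := one_le_div_totient (show d ≠ 0 by lia)
  calc (#(primeMultipliers d K) : ℝ)
      ≤ d / φ d * (K / Real.log t) + t ^ 2 :=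
        card_primeMultipliers_le_div_log_add_sq (by lia) K ht₁ htd
    _ ≤ d / φ d * (K / Real.log t) + d / φ d * (0.3 * K / Real.log (K + 1)) := by
        gcongr
        exact hsq.trans (le_mul_of_one_le_left ((sq_nonneg t).trans hsq) hD)
    _ = d / φ d * (3.3 * K / Real.log (K + 1)) := by
        rw [hlogK]
        field_simp
        norm_num

end PrimeMultipliers

section SummationByParts

open Finset Nat

theorem sum_Ico_one_div_mul_add_one {k n : ℕ} (hk : k ≠ 0) (hkn : k ≤ n) :
    ∑ j ∈ Ico k n, (1 : ℝ) / (j * (j + 1)) = 1 / k - 1 / n := by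
  rw [← neg_sub, ← sum_Ico_sub (fun j : ℕ ↦ 1 / (j : ℝ)) hkn, ← sum_neg_distrib]
  refine sum_congr rfl fun j hj ↦ ?_
  have hj₀ : (j : ℝ) ≠ 0 := mod_cast (hk.pos.trans_le (mem_Ico.1 hj).1).ne'
  push_cast
  field_simp
  ring

theorem one_div_le_sum_Ico_add {k n : ℕ} (hk : k ≠ 0) (hn : n ≠ 0) :
    (1 : ℝ) / k ≤ ∑ j ∈ Ico 1 n with k ≤ j, (1 : ℝ) / (j * (j + 1)) + 1 / n := by
  rcases le_total k n with hkn | hnk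
  · have hIco : {j ∈ Ico 1 n | k ≤ j} = Ico k n := by grind
    rw [hIco, sum_Ico_one_div_mul_add_one hk hkn, sub_add_cancel]
  · refine le_add_of_nonneg_of_le (sum_nonneg fun _ _ ↦ by positivity) ?_
    exact one_div_le_one_div_of_le (mod_cast hn.pos) (mod_cast hnk)

theorem sum_one_div_le_sum_card_filter_le_div {s : Finset ℕ} (hs : 0 ∉ s) {n : ℕ} (hn : n ≠ 0) :
    ∑ k ∈ s, (1 : ℝ) / k ≤
      ∑ j ∈ Ico 1 n, (#{k ∈ s | k ≤ j} : ℝ) / (j * (j + 1)) + #s / n := by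
  calc ∑ k ∈ s, (1 : ℝ) / k
      ≤ ∑ k ∈ s, (∑ j ∈ Ico 1 n with k ≤ j, (1 : ℝ) / (j * (j + 1)) + 1 / n) :=
        sum_le_sum fun k hk ↦ one_div_le_sum_Ico_add (ne_of_mem_of_not_mem hk hs) hn
    _ = ∑ j ∈ Ico 1 n, (#{k ∈ s | k ≤ j} : ℝ) / (j * (j + 1)) + #s / n := by
        simp only [sum_add_distrib, sum_filter, sum_const, nsmul_eq_mul, mul_one_div]
        rw [sum_comm]
        simp only [← sum_filter, sum_const, nsmul_eq_mul, mul_one_div]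

theorem one_div_add_one_le_log_sub_log {s : ℝ} (hs : 0 < s) :
    1 / (s + 1) ≤ Real.log (s + 1) - Real.log s := by
  rw [← Real.log_div (by positivity) hs.ne']
  refine le_of_eq_of_le ?_ (Real.one_sub_inv_le_log_of_pos (by positivity))
  field_simp
  ring

theorem one_div_mul_log_le_log_log_sub_log_log {s : ℝ} (hs : 1 < s) :
    1 / ((s + 1) * Real.log (s + 1)) ≤ Real.log (Real.log (s + 1)) - Real.log (Real.log s) := by
  have hlog : 0 < Real.log s := Real.log_pos hs
  have hlog' : 0 < Real.log (s + 1) := Real.log_pos (by linarith)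
  calc 1 / ((s + 1) * Real.log (s + 1)) = 1 / (s + 1) / Real.log (s + 1) := by rw [div_div]
    _ ≤ (Real.log (s + 1) - Real.log s) / Real.log (s + 1) := by
        gcongr
        exact one_div_add_one_le_log_sub_log (by linarith)
    _ = 1 - (Real.log (s + 1) / Real.log s)⁻¹ := by field_simp
    _ ≤ Real.log (Real.log (s + 1) / Real.log s) := Real.one_sub_inv_le_log_of_pos (by positivity)
    _ = Real.log (Real.log (s + 1)) - Real.log (Real.log s) := Real.log_div hlog'.ne' hlog.ne'

end SummationByParts

section ReciprocalSum

open Finset Nat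

theorem sum_Ico_one_card_primeMultipliers_div_le {d n : ℕ} (hd : 2 ≤ d) (hn : 1 ≤ n) :
    ∑ j ∈ Ico 1 n, (#(primeMultipliers d j) : ℝ) / (j * (j + 1)) ≤
      d / φ d * (Real.log n / 2) := by
  calc ∑ j ∈ Ico 1 n, (#(primeMultipliers d j) : ℝ) / (j * (j + 1))
      ≤ ∑ j ∈ Ico 1 n, (d / φ d / 2 * (Real.log (j + 1 : ℕ) - Real.log j) : ℝ) := by
        refine sum_le_sum fun j hj ↦ ?_
        have hj₀ : (0 : ℝ) < j := mod_cast (mem_Ico.1 hj).1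
        calc (#(primeMultipliers d j) : ℝ) / (j * (j + 1))
            ≤ d / φ d * (j / 2) / (j * (j + 1)) := by
              gcongr
              exact card_primeMultipliers_le_div_totient_mul_half hd j
          _ = d / φ d / 2 * (1 / (j + 1)) := by field_simp
          _ ≤ d / φ d / 2 * (Real.log (j + 1 : ℕ) - Real.log j) := by
              push_cast
              gcongr
              exact one_div_add_one_le_log_sub_log hj₀
    _ = d / φ d * (Real.log n / 2) := by
        rw [← mul_sum, sum_Ico_sub (fun j : ℕ ↦ Real.log j) hn, Nat.cast_one, Real.log_one]
        ring

theorem sum_Ico_card_primeMultipliers_div_le {d m n : ℕ} (hm : 2 ^ 16 ≤ m) (hmn : m ≤ n)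
    (hnd : n ≤ d) :
    ∑ j ∈ Ico m n, (#(primeMultipliers d j) : ℝ) / (j * (j + 1)) ≤
      d / φ d * (3.3 * (Real.log (Real.log n) - Real.log (Real.log m))) := by
  calc ∑ j ∈ Ico m n, (#(primeMultipliers d j) : ℝ) / (j * (j + 1))
      ≤ ∑ j ∈ Ico m n,
          d / φ d * 3.3 * (Real.log (Real.log (j + 1 : ℕ)) - Real.log (Real.log j)) := by
        refine sum_le_sum fun j hj ↦ ?_
        obtain ⟨hmj, hjn⟩ := mem_Ico.1 hj
        have hj₁ : (1 : ℝ) < j := mod_cast show 1 < j by lia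
        have hlog : 0 < Real.log (j + 1) := Real.log_pos (by linarith)
        calc (#(primeMultipliers d j) : ℝ) / (j * (j + 1))
            ≤ d / φ d * (3.3 * j / Real.log (j + 1)) / (j * (j + 1)) := by
              gcongr
              exact card_primeMultipliers_le_div_totient_mul_div_log (hm.trans hmj)
                (hjn.trans_le hnd)
          _ = d / φ d * 3.3 * (1 / ((j + 1) * Real.log (j + 1))) := by field_simp
          _ ≤ d / φ d * 3.3 * (Real.log (Real.log (j + 1 : ℕ)) - Real.log (Real.log j)) := by
              push_cast
              gcongr
              exact one_div_mul_log_le_log_log_sub_log_log hj₁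
    _ = d / φ d * (3.3 * (Real.log (Real.log n) - Real.log (Real.log m))) := by
        rw [← mul_sum, sum_Ico_sub (fun j : ℕ ↦ Real.log (Real.log j)) hmn, mul_assoc]

theorem sum_Ico_one_card_primeMultipliers_div_le_log_min {d : ℕ} (hd : 2 ≤ d) :
    ∑ j ∈ Ico 1 d, (#(primeMultipliers d j) : ℝ) / (j * (j + 1)) ≤
      d / φ d * (Real.log (min d (2 ^ 16) : ℕ) / 2 +
        3.3 * (Real.log (Real.log d) - Real.log (Real.log (min d (2 ^ 16) : ℕ)))) := by
  rcases le_total d (2 ^ 16) with hle | hge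
  · rw [min_eq_left hle, sub_self, mul_zero, add_zero]
    exact sum_Ico_one_card_primeMultipliers_div_le hd (by lia)
  · rw [min_eq_right hge, mul_add,
      ← sum_Ico_consecutive _ (show 1 ≤ 2 ^ 16 by norm_num) hge]
    refine add_le_add ?_ ?_
    · exact sum_Ico_one_card_primeMultipliers_div_le hd (by norm_num)
    · exact sum_Ico_card_primeMultipliers_div_le le_rfl hge le_rfl

theorem five_le_log {t : ℝ} (ht : 173 ≤ t) : 5 ≤ Real.log t := by
  rw [Real.le_log_iff_exp_le (by linarith)]
  calc Real.exp 5 = Real.exp 1 ^ 5 := by rw [← Real.exp_nat_mul]; norm_num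
    _ ≤ 2.7182818286 ^ 5 := by gcongr; exact Real.exp_one_lt_d9.le
    _ ≤ t := by norm_num; linarith

theorem half_add_div_lt_mul_log {L : ℝ} (hL : 5 ≤ L) (hL' : L ≤ 15) :
    L / 2 + 4.4 / L < 3.3 * Real.log L := by
  have hL₀ : 0 < L := by linarith
  have htangent : 3 * Real.log 2 + (1 - 8 / L) ≤ Real.log L := by
    have := Real.one_sub_inv_le_log_of_pos (show 0 < L / 8 by positivity)
    rw [Real.log_div hL₀.ne' (by norm_num), inv_div,
      show (8 : ℝ) = 2 ^ 3 by norm_num, Real.log_pow] at this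
    push_cast at this
    linarith
  have hconvex : L / 2 + 30.8 / L < 10.1 := by
    rw [div_add_div _ _ two_ne_zero hL₀.ne', div_lt_iff₀ (by positivity)]
    nlinarith
  have hsplit : 30.8 / L = 4.4 / L + 3.3 * (8 / L) := by ring
  linarith [Real.log_two_gt_d9]

theorem half_log_add_div_log_lt_mul_log_log {t : ℝ} (ht : 173 ≤ t) (ht' : t ≤ 2 ^ 16) :
    Real.log t / 2 + 4.4 / Real.log t < 3.3 * Real.log (Real.log t) := by
  refine half_add_div_lt_mul_log (five_le_log ht) ?_
  calc Real.log t ≤ Real.log (2 ^ 16) := Real.log_le_log (by linarith) ht'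
    _ = 16 * Real.log 2 := by rw [Real.log_pow]; norm_num
    _ ≤ 15 := by linarith [Real.log_two_lt_d9]

theorem sum_one_div_primeMultipliers_lt {d : ℕ} (hd : 173 ≤ d) {s : Finset ℕ} (hs₀ : 0 ∉ s)
    (hs : ∀ k ∈ s, (k * d + 1).Prime) (hcard : #s * Real.log d ≤ 4.4 * d) :
    ∑ k ∈ s, (1 : ℝ) / k < d / φ d * (3.3 * Real.log (Real.log d)) := by
  set m := min d (2 ^ 16)
  have hm : (173 : ℝ) ≤ m := mod_cast show 173 ≤ m by lia
  have hm' : (m : ℝ) ≤ 2 ^ 16 := mod_cast min_le_right d (2 ^ 16)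
  have hlog_m : 0 < Real.log m := Real.log_pos (by linarith)
  have hlog_md : Real.log m ≤ Real.log d :=
    Real.log_le_log (by linarith) (mod_cast min_le_left d (2 ^ 16))
  have hd₀ : (0 : ℝ) < d := mod_cast show 0 < d by lia
  have hD : (1 : ℝ) ≤ d / φ d := one_le_div_totient (by lia)
  have htail : (#s : ℝ) / d ≤ d / φ d * (4.4 / Real.log m) := calc
    (#s : ℝ) / d ≤ 4.4 / Real.log d := by rwa [div_le_div_iff₀ hd₀ (by linarith)]
    _ ≤ 4.4 / Real.log m := by gcongr
    _ ≤ d / φ d * (4.4 / Real.log m) := le_mul_of_one_le_left (by positivity) hD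
  have hsubset (j : ℕ) : {k ∈ s | k ≤ j} ⊆ primeMultipliers d j := fun k hk ↦ by
    obtain ⟨hk, hkj⟩ := mem_filter.1 hk
    exact mem_filter.2 ⟨mem_Ioc.2 ⟨(ne_of_mem_of_not_mem hk hs₀).pos, hkj⟩, hs k hk⟩
  calc ∑ k ∈ s, (1 : ℝ) / k
      ≤ ∑ j ∈ Ico 1 d, (#{k ∈ s | k ≤ j} : ℝ) / (j * (j + 1)) + #s / d :=
        sum_one_div_le_sum_card_filter_le_div hs₀ (by lia)
    _ ≤ ∑ j ∈ Ico 1 d, (#(primeMultipliers d j) : ℝ) / (j * (j + 1)) + #s / d := by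
        gcongr with j
        exact hsubset j
    _ ≤ d / φ d * (Real.log m / 2 + 3.3 * (Real.log (Real.log d) - Real.log (Real.log m))) +
          d / φ d * (4.4 / Real.log m) :=
        add_le_add (sum_Ico_one_card_primeMultipliers_div_le_log_min (by lia)) htail
    _ = d / φ d * (3.3 * Real.log (Real.log d) +
          (Real.log m / 2 + 4.4 / Real.log m - 3.3 * Real.log (Real.log m))) := by ring
    _ < d / φ d * (3.3 * Real.log (Real.log d)) := by
        gcongr
        linarith [half_log_add_div_log_lt_mul_log_log hm hm']

end ReciprocalSum

section MultiplicativeOrder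

open Nat

theorem natCast_pow_div_eq_one_iff {a b p : ℕ} [Fact p.Prime] (hba : b ≤ a) (hb : ¬ p ∣ b) (l : ℕ) :
    ((a : ZMod p) / b) ^ l = 1 ↔ p ∣ a ^ l - b ^ l := by
  have hb' : (b : ZMod p) ≠ 0 := by rwa [Ne, ZMod.natCast_eq_zero_iff]
  rw [div_pow, div_eq_one_iff_eq (pow_ne_zero l hb'), ← ZMod.natCast_eq_zero_iff,
    Nat.cast_sub (Nat.pow_le_pow_left hba l), sub_eq_zero, Nat.cast_pow, Nat.cast_pow]

theorem ellp_eq_orderOf_div {a b p : ℕ} [Fact p.Prime] (hba : b ≤ a) (hb : ¬ p ∣ b) :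
    ellp a b p = orderOf ((a : ZMod p) / b) := by
  simp only [ellp, ← natCast_pow_div_eq_one_iff hba hb]
  rcases (orderOf ((a : ZMod p) / b)).eq_zero_or_pos with hzero | hpos
  · have hnot := orderOf_eq_zero_iff'.1 hzero
    rw [hzero, Nat.sInf_eq_zero]
    exact Or.inr (Set.eq_empty_of_forall_notMem fun l hl ↦ hnot l hl.1 hl.2)
  · exact IsLeast.csInf_eq
      ⟨⟨hpos, pow_orderOf_eq_one _⟩, fun l hl ↦ orderOf_le_of_pow_eq_one hl.1 hl.2⟩

theorem dvd_pow_ellp_sub_pow_ellp {a b p : ℕ} (hp : p.Prime) (hba : b ≤ a) (hb : ¬ p ∣ b) :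
    p ∣ a ^ ellp a b p - b ^ ellp a b p := by
  have : Fact p.Prime := ⟨hp⟩
  rw [← natCast_pow_div_eq_one_iff hba hb, ellp_eq_orderOf_div hba hb, pow_orderOf_eq_one]

theorem ellp_dvd_sub_one {a b p : ℕ} (hp : p.Prime) (hba : b ≤ a) (hab : ¬ p ∣ a * b) :
    ellp a b p ∣ p - 1 := by
  have : Fact p.Prime := ⟨hp⟩
  rw [hp.dvd_mul, not_or] at hab
  rw [ellp_eq_orderOf_div hba hab.2]
  exact ZMod.orderOf_dvd_card_sub_one (div_ne_zero
    (by rw [Ne, ZMod.natCast_eq_zero_iff]; exact hab.1)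
    (by rw [Ne, ZMod.natCast_eq_zero_iff]; exact hab.2))

end MultiplicativeOrder

section PrimesModulo

open Finset Nat

theorem log_prod_one_add_le_sum {ι : Type*} {s : Finset ι} {f : ι → ℝ} (hf : ∀ i ∈ s, 0 ≤ f i) :
    Real.log (∏ i ∈ s, (1 + f i)) ≤ ∑ i ∈ s, f i := by
  rw [Real.log_le_iff_le_exp (prod_pos fun i hi ↦ by linarith [hf i hi]), Real.exp_sum]
  exact prod_le_prod (fun i hi ↦ by linarith [hf i hi]) fun i _ ↦ by
    linarith [Real.add_one_le_exp (f i)]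

theorem card_mul_log_le_log_of_primes_dvd {s : Finset ℕ} {d N : ℕ} (hd : d ≠ 0) (hN : N ≠ 0)
    (hprime : ∀ p ∈ s, p.Prime) (hdvd : ∀ p ∈ s, p ∣ N) (hle : ∀ p ∈ s, d ≤ p) :
    #s * Real.log d ≤ Real.log N := by
  have hpow : d ^ #s ≤ N := calc
    d ^ #s ≤ ∏ p ∈ s, p := pow_card_le_prod s _ d hle
    _ ≤ N := Nat.le_of_dvd hN.pos (prod_primes_dvd N (fun p hp ↦ (hprime p hp).prime) hdvd)
  rw [← Real.log_pow]
  exact Real.log_le_log (by positivity) (mod_cast hpow)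

theorem sum_one_div_sub_one_lt {d : ℕ} (hd : 173 ≤ d) {s : Finset ℕ} (hprime : ∀ p ∈ s, p.Prime)
    (hmod : ∀ p ∈ s, d ∣ p - 1) (hcard : #s * Real.log d ≤ 4.4 * d) :
    ∑ p ∈ s, 1 / ((p : ℝ) - 1) < 3.3 * Real.log (Real.log d) / φ d := by
  have heq : ∀ p ∈ s, (p - 1) / d * d + 1 = p := fun p hp ↦ by
    rw [Nat.div_mul_cancel (hmod p hp), Nat.sub_add_cancel (hprime p hp).one_le]
  have hinj : Set.InjOn (fun p ↦ (p - 1) / d) s := fun p hp r hr hpr ↦ by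
    rw [← heq p hp, ← heq r hr]
    exact congrArg (· * d + 1) hpr
  have hmultipliers := sum_one_div_primeMultipliers_lt (s := s.image fun p ↦ (p - 1) / d) hd
    (fun h ↦ by
      obtain ⟨p, hp, hzero⟩ := mem_image.1 h
      have := heq p hp
      rw [hzero, zero_mul, zero_add] at this
      exact (hprime p hp).one_lt.ne this)
    (forall_mem_image.2 fun p hp ↦ by rw [heq p hp]; exact hprime p hp)
    (by rwa [Finset.card_image_of_injOn hinj])
  rw [sum_image hinj] at hmultipliers
  calc ∑ p ∈ s, 1 / ((p : ℝ) - 1) = (∑ p ∈ s, (1 : ℝ) / ((p - 1) / d : ℕ)) / d := by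
        rw [sum_div]
        refine sum_congr rfl fun p hp ↦ ?_
        have hcast : (((p - 1) / d : ℕ) : ℝ) * d + 1 = p := mod_cast heq p hp
        rw [div_div, eq_sub_iff_add_eq.2 hcast]
    _ < d / φ d * (3.3 * Real.log (Real.log d)) / d := by gcongr
    _ = 3.3 * Real.log (Real.log d) / φ d := by field_simp

theorem log_pow_sub_pow_le {a b : ℕ} (hba : b < a) (ha : a ≤ 80) {d : ℕ} (hd : d ≠ 0) :
    Real.log (a ^ d - b ^ d : ℕ) ≤ 4.4 * d := by
  have hpos : 0 < a ^ d - b ^ d := Nat.sub_pos_of_lt (Nat.pow_lt_pow_left hba hd)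
  have hle : a ^ d - b ^ d ≤ 80 ^ d := (Nat.sub_le _ _).trans (Nat.pow_le_pow_left ha d)
  have hlog₈₀ : 3 * Real.log 80 ≤ 19 * Real.log 2 := by
    have := Real.log_le_log (by norm_num) (show (80 : ℝ) ^ 3 ≤ 2 ^ 19 by norm_num)
    simpa only [Real.log_pow, Nat.cast_ofNat] using this
  calc Real.log (a ^ d - b ^ d : ℕ) ≤ Real.log ((80 : ℝ) ^ d) :=
        Real.log_le_log (mod_cast hpos) (mod_cast hle)
    _ = Real.log 80 * d := by rw [Real.log_pow, mul_comm]
    _ ≤ 4.4 * d := by gcongr; linarith [Real.log_two_lt_d9]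

end PrimesModulo

theorem log_prod_lt_of_le_173_general (a b d : ℕ) (hba : b < a) (ha : a ≤ 80) (hd : 173 ≤ d) :
    Real.log (∏ p ∈ Finset.range (a ^ d - b ^ d + 1) with
        p.Prime ∧ Odd p ∧ ¬ p ∣ a * b ∧ ellp a b p = d, (1 + 1 / ((p : ℝ) - 1))) <
      3.3 * Real.log (Real.log d) / Nat.totient d := by
  set s := {p ∈ Finset.range (a ^ d - b ^ d + 1) |
    p.Prime ∧ Odd p ∧ ¬ p ∣ a * b ∧ ellp a b p = d}
  have hprime : ∀ p ∈ s, p.Prime := fun p hp ↦ (Finset.mem_filter.1 hp).2.1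
  have hdvd : ∀ p ∈ s, p ∣ a ^ d - b ^ d := fun p hp ↦ by
    obtain ⟨-, -, -, hab, hell⟩ := Finset.mem_filter.1 hp
    rw [← hell]
    exact dvd_pow_ellp_sub_pow_ellp (hprime p hp) hba.le (mt (·.mul_left a) hab)
  have hmod : ∀ p ∈ s, d ∣ p - 1 := fun p hp ↦ by
    obtain ⟨-, -, -, hab, hell⟩ := Finset.mem_filter.1 hp
    rw [← hell]
    exact ellp_dvd_sub_one (hprime p hp) hba.le hab
  have hle : ∀ p ∈ s, d ≤ p := fun p hp ↦
    (Nat.le_of_dvd (Nat.sub_pos_of_lt (hprime p hp).one_lt) (hmod p hp)).trans (Nat.sub_le p 1)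
  have hd₀ : d ≠ 0 := by lia
  have hpos : a ^ d - b ^ d ≠ 0 := (Nat.sub_pos_of_lt (Nat.pow_lt_pow_left hba hd₀)).ne'
  have hcard := card_mul_log_le_log_of_primes_dvd hd₀ hpos hprime hdvd hle
  refine (log_prod_one_add_le_sum fun p hp ↦ ?_).trans_lt
    (sum_one_div_sub_one_lt hd hprime hmod (hcard.trans (log_pow_sub_pow_le hba ha hd₀)))
  exact one_div_nonneg.2 (sub_nonneg.2 (mod_cast (hprime p hp).one_le))

theorem log_prod_lt_of_le_173 (x y z m n : ℕ) (hx : 0 < x) (hy : 0 < y) (hz : 0 < z)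
    (hm : 0 < m) (hn : 0 < n) (hxy : y < x) (hzxy : z ≤ x - y)
    (hgcd : Nat.gcd m n = 1) (hmn : n < m)
    (heq : Nat.totient (z * ((x ^ m - y ^ m) / (x - y))) =
      z * ((x ^ n - y ^ n) / (x - y)))
    (hx80 : x ≤ 80)
    (d₁ x₁ y₁ : ℕ) (hd₁ : d₁ = Nat.gcd x y) (hx₁ : x₁ = x / d₁) (hy₁ : y₁ = y / d₁)
    (d : ℕ) (hd : d ∣ m) (hd173 : 173 ≤ d) :
    Real.log (∏ p ∈ (Finset.range (x₁ ^ d - y₁ ^ d + 1)).filter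
        (fun p => p.Prime ∧ Odd p ∧ ¬ p ∣ x₁ * y₁ ∧ ellp x₁ y₁ p = d),
      (1 + 1 / ((p : ℝ) - 1))) <
      3.3 * Real.log (Real.log d) / (Nat.totient d) := by
  subst hd₁ hx₁ hy₁
  exact log_prod_lt_of_le_173_general _ _ d
    (Nat.div_lt_div_of_lt_of_dvd (Nat.gcd_dvd_left x y) hxy) ((Nat.div_le_self _ _).trans hx80)
    hd173
end

section
/- Under the standing assumptions, assume further x ≤ 80. If q is a prime divisor of m with q < 173, then q^6 does not divide x₁^(q−1) − y₁^(q−1). -/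
/-!
Write `x = d a` and `y = d b` with `a`, `b` coprime. For odd primes `q < 173` the claim is a finite
computation over the coprime pairs `b < a ≤ 80`. For `q = 2` it suffices to exclude `4 ∣ a - b`.
In that case `a` and `b` are odd and `a + b = 2 s` with `s > 1` odd. As `n` is odd, the right-hand
side of the equation is `c = z d ^ (n - 1)` times an odd number. As `m` is even, `a + b` divides
`(a ^ m - b ^ m) / (a - b)`, so `2 s c` divides the argument of `φ`. The factor `s` contributes an
even totient, so the left-hand side has a larger `2`-adic valuation than `c`.
-/

open Finset Nat

section DifferenceQuotient

variable {x y : ℕ}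

lemma pow_sub_pow_div_sub (hyx : y < x) (n : ℕ) :
    (x ^ n - y ^ n) / (x - y) = ∑ i ∈ range n, x ^ i * y ^ (n - 1 - i) :=
  Nat.div_eq_of_eq_mul_left (Nat.sub_pos_of_lt hyx) (geom_sum₂_mul_of_ge hyx.le n).symm

lemma mul_pow_sub_mul_pow_div_sub {d : ℕ} (hd : 0 < d) (hyx : y < x) (n : ℕ) :
    ((d * x) ^ n - (d * y) ^ n) / (d * x - d * y) =
      d ^ (n - 1) * ((x ^ n - y ^ n) / (x - y)) := by
  rw [pow_sub_pow_div_sub (Nat.mul_lt_mul_of_pos_left hyx hd), pow_sub_pow_div_sub hyx, mul_sum]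
  refine sum_congr rfl fun i hi ↦ ?_
  have hexp : n - 1 = i + (n - 1 - i) := by have := mem_range.1 hi; lia
  calc (d * x) ^ i * (d * y) ^ (n - 1 - i)
      = d ^ (i + (n - 1 - i)) * (x ^ i * y ^ (n - 1 - i)) := by ring
    _ = d ^ (n - 1) * (x ^ i * y ^ (n - 1 - i)) := by rw [← hexp]

lemma odd_pow_sub_pow_div_sub (hx : Odd x) (hy : Odd y) (hyx : y < x) {n : ℕ} (hn : Odd n) :
    Odd ((x ^ n - y ^ n) / (x - y)) := by
  rw [pow_sub_pow_div_sub hyx, odd_sum_iff_odd_card_odd,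
    filter_true_of_mem fun _ _ ↦ hx.pow.mul hy.pow, card_range]
  exact hn

lemma add_dvd_pow_sub_pow_div_sub {n : ℕ} (hn : Even n) :
    x + y ∣ (x ^ n - y ^ n) / (x - y) := by
  refine Nat.dvd_div_of_mul_dvd ?_
  obtain ⟨k, rfl⟩ := hn.two_dvd
  rw [mul_comm, ← Nat.sq_sub_sq, pow_mul, pow_mul]
  exact Nat.sub_dvd_pow_sub_pow _ _ k

end DifferenceQuotient

lemma totient_ne_mul_odd {c s t N : ℕ} (hc : c ≠ 0) (hs : Odd s) (hs1 : s ≠ 1) (ht : Odd t)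
    (hN : c * (2 * s) ∣ N) : φ N ≠ c * t := by
  intro heq
  obtain ⟨k, w, hw, rfl⟩ := Nat.exists_eq_two_pow_mul_odd hc
  have htotient : φ (2 ^ (k + 1) * s) = 2 ^ k * φ s := by
    rw [totient_mul (hs.coprime_two_left.pow_left _), totient_prime_pow_succ prime_two]
    norm_num
  have hφs : 2 ∣ φ s := (totient_even (by obtain ⟨r, rfl⟩ := hs; lia)).two_dvd
  have hdvd : 2 ^ (k + 1) * s ∣ N := (Dvd.intro w (by ring)).trans hN
  have hpow : 2 ^ k * 2 ∣ 2 ^ k * (w * t) :=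
    calc 2 ^ k * 2 ∣ 2 ^ k * φ s := Nat.mul_dvd_mul_left _ hφs
      _ = φ (2 ^ (k + 1) * s) := htotient.symm
      _ ∣ φ N := totient_dvd_of_dvd hdvd
      _ = 2 ^ k * (w * t) := by rw [heq, mul_assoc]
  exact (hw.mul ht).not_two_dvd_nat (Nat.dvd_of_mul_dvd_mul_left (by positivity) hpow)

lemma odd_and_odd_of_coprime_of_two_dvd_sub {a b : ℕ} (hab : a.Coprime b) (hba : b < a)
    (h : 2 ∣ a - b) : Odd a ∧ Odd b := by
  have hb : Odd b := by
    by_contra hb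
    have hb2 : 2 ∣ b := (Nat.not_odd_iff_even.1 hb).two_dvd
    exact Nat.not_coprime_of_dvd_of_dvd one_lt_two ((Nat.dvd_sub_iff_left hba.le hb2).1 h) hb2 hab
  exact ⟨by grind, hb⟩

lemma not_four_dvd_sub_of_totient_eq {a b d z m n : ℕ} (hab : a.Coprime b) (hba : b < a)
    (hd : 0 < d) (hz : 0 < z) (hm : Even m) (hn : Odd n) (hnm : n ≤ m)
    (heq : φ (z * (((d * a) ^ m - (d * b) ^ m) / (d * a - d * b))) =
      z * (((d * a) ^ n - (d * b) ^ n) / (d * a - d * b))) :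
    ¬ 4 ∣ a - b := by
  intro h4
  obtain ⟨ha, hb⟩ := odd_and_odd_of_coprime_of_two_dvd_sub hab hba (by lia)
  obtain ⟨s, hs⟩ : 2 ∣ a + b := (ha.add_odd hb).two_dvd
  have hs_odd : Odd s := by
    obtain ⟨r, rfl⟩ := hb
    obtain ⟨t, ht⟩ := h4
    exact ⟨r + t, by lia⟩
  have hs1 : s ≠ 1 := by lia
  simp only [mul_pow_sub_mul_pow_div_sub hd hba, ← mul_assoc] at heq
  refine totient_ne_mul_odd (by positivity) hs_odd hs1 (odd_pow_sub_pow_div_sub ha hb hba hn) ?_ heq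
  rw [← hs]
  gcongr
  exact add_dvd_pow_sub_pow_div_sub hm

lemma pow_six_not_dvd_of_coprime :
    ∀ a ≤ 80, ∀ b < a, a.Coprime b → ∀ q ∈ primesBelow 173, q ≠ 2 →
      ¬ q ^ 6 ∣ a ^ (q - 1) - b ^ (q - 1) := by
  decide +kernel

theorem pow_six_not_dvd_general {x y z m n q : ℕ} (hz : 0 < z) (hyx : y < x)
    (hmn : m.Coprime n) (hnm : n < m)
    (heq : φ (z * ((x ^ m - y ^ m) / (x - y))) = z * ((x ^ n - y ^ n) / (x - y)))
    (hx80 : x / x.gcd y ≤ 80) (hq : q.Prime) (hqm : q ∣ m) (hq173 : q < 173) :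
    ¬ q ^ 6 ∣ (x / x.gcd y) ^ (q - 1) - (y / x.gcd y) ^ (q - 1) := by
  intro hdvd
  have hd : 0 < x.gcd y := Nat.gcd_pos_of_pos_left y (by lia)
  have hcop : (x / x.gcd y).Coprime (y / x.gcd y) := Nat.coprime_div_gcd_div_gcd hd
  have hlt : y / x.gcd y < x / x.gcd y := Nat.div_lt_div_of_lt_of_dvd (x.gcd_dvd_left y) hyx
  obtain rfl | hq2 := eq_or_ne q 2
  · have hn : Odd n := (hmn.coprime_dvd_left hqm).odd_of_left
    refine not_four_dvd_sub_of_totient_eq hcop hlt hd hz (even_iff_two_dvd.2 hqm) hn hnm.le ?_ ?_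
    · rwa [Nat.mul_div_cancel' (x.gcd_dvd_left y), Nat.mul_div_cancel' (x.gcd_dvd_right y)]
    · rw [pow_one, pow_one] at hdvd
      exact dvd_trans (by norm_num) hdvd
  · exact pow_six_not_dvd_of_coprime _ hx80 _ hlt hcop q (mem_primesBelow.2 ⟨hq173, hq⟩) hq2 hdvd

theorem pow_six_not_dvd (x y z m n : ℕ) (hx : 0 < x) (hy : 0 < y) (hz : 0 < z)
    (hm : 0 < m) (hn : 0 < n) (hxy : y < x) (hzxy : z ≤ x - y)
    (hgcd : Nat.gcd m n = 1) (hmn : n < m)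
    (heq : Nat.totient (z * ((x ^ m - y ^ m) / (x - y))) =
      z * ((x ^ n - y ^ n) / (x - y)))
    (hx80 : x ≤ 80)
    (d₁ x₁ y₁ : ℕ) (hd₁ : d₁ = Nat.gcd x y) (hx₁ : x₁ = x / d₁) (hy₁ : y₁ = y / d₁)
    (q : ℕ) (hq : q.Prime) (hqm : q ∣ m) (hq173 : q < 173) :
    ¬ q ^ 6 ∣ x₁ ^ (q - 1) - y₁ ^ (q - 1) := by
  subst hd₁ hx₁ hy₁
  exact pow_six_not_dvd_general hz hxy hgcd hmn heq ((Nat.div_le_self _ _).trans hx80) hq hqm hq173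
end

section
/- Under the standing assumptions, assume further x ≤ 80. Then every prime divisor of m is at least 173; in particular the least prime divisor p(m) of m satisfies p(m) ≥ 173. -/
/-!
Write `x = d * X` and `y = d * Y` with `X`, `Y` coprime, `U k = (X ^ k - Y ^ k) / (X - Y)` and
`N = z * (x ^ m - y ^ m) / (x - y)`. As `φ N = z * (x ^ n - y ^ n) / (x - y)`, the product of
`p / (p - 1)` over the primes `p ∣ N`, which is `N / φ N`, exceeds `x`. Such a prime divides
`z * d`, or it is congruent to `1` modulo a prime `r ∣ m`, or it is itself a prime factor of `m`
and of `X - Y`. Comparing the `r`-adic valuations of `N` and `φ N` shows that `N` has at most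
`1 + v_r (U n)` prime factors congruent to `1` modulo `r`, where `v_r (U n)` is at most the
valuation of `X ^ (r - 1) - Y ^ (r - 1)` because `r ∤ n`; by a table of Fermat quotients this is
small for `r < 173`. On the other hand, let `q` be the least prime factor of `m`. By Zsigmondy's
theorem, each prime `r ∣ m` gives a prime factor of `N` at which `X / Y` has order `lcm q r`; these
are distinct and congruent to `1` modulo `q`, so that `m` too has at most `1 + v_q (U n)` prime
factors. If `q < 173`, then all the primes of `N` together contribute a product of at most `x`.
-/

namespace TotientQuotient

open Finset

section OrderedProducts

variable {R : Type*} [CommSemiring R] [PartialOrder R] [IsOrderedRing R]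

lemma prod_range_card_le_prod {h : ℕ → R} (h_nonneg : ∀ i, 0 ≤ h i) (h_mono : Monotone h)
    (s : Finset ℕ) : ∏ i ∈ range #s, h i ≤ ∏ i ∈ s, h i := by
  induction s using Finset.induction_on_max with
  | empty => simp
  | insert a s ha ih =>
    have ha' : a ∉ s := fun h => lt_irrefl a (ha a h)
    have h_card : #s ≤ a := by
      simpa using card_le_card fun b hb => mem_range.2 (ha b hb)
    rw [card_insert_of_notMem ha', prod_range_succ, prod_insert ha', mul_comm]
    exact mul_le_mul (h_mono h_card) ih (prod_nonneg fun i _ => h_nonneg i) (h_nonneg a)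

lemma prod_range_card_le_prod_of_subset_range {e : ℕ → ℕ} (he : StrictMono e) {g : ℕ → R}
    (g_nonneg : ∀ i, 0 ≤ g i) (g_mono : MonotoneOn g (Set.range e)) {s : Finset ℕ}
    (hs : ↑s ⊆ Set.range e) : ∏ i ∈ range #s, g (e i) ≤ ∏ a ∈ s, g a := by
  obtain ⟨t, rfl⟩ : ∃ t : Finset ℕ, t.image e = s := by
    rw [← Set.image_univ] at hs
    obtain ⟨t, -, ht⟩ := subset_set_image_iff.1 hs
    exact ⟨t, ht⟩
  rw [card_image_of_injective t he.injective, prod_image he.injective.injOn]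
  exact prod_range_card_le_prod (h := fun i => g (e i)) (fun i => g_nonneg _)
    (fun i j hij => g_mono ⟨i, rfl⟩ ⟨j, rfl⟩ (he.monotone hij)) t

end OrderedProducts

section EulerFactor

/-- The factor `p / (p - 1)` that a prime `p ∣ N` contributes to `N / φ N`. It is written as
`1 + (p - 1)⁻¹` with truncated subtraction, so that it is at least `1` also at `p = 0, 1`. -/
def eulerFactor (p : ℕ) : ℚ := 1 + ((p - 1 : ℕ) : ℚ)⁻¹

/-- The product of the Euler factors over a finite set `s`; for the set of prime factors of `N`
this is `N / φ N`. -/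
def eulerProd (s : Finset ℕ) : ℚ := ∏ p ∈ s, eulerFactor p

lemma one_le_eulerFactor (p : ℕ) : 1 ≤ eulerFactor p := by
  unfold eulerFactor
  exact le_add_of_nonneg_right (by positivity)

lemma eulerFactor_pos (p : ℕ) : 0 < eulerFactor p :=
  zero_lt_one.trans_le (one_le_eulerFactor p)

lemma eulerFactor_antitoneOn : AntitoneOn eulerFactor (Set.Ici 2) := by
  intro a ha b _ hab
  have : (0 : ℚ) < (a - 1 : ℕ) := by
    exact_mod_cast Nat.sub_pos_of_lt (Set.mem_Ici.1 ha)
  unfold eulerFactor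
  gcongr

lemma eulerFactor_eq_inv {p : ℕ} (hp : 2 ≤ p) : eulerFactor p = (1 - (p : ℚ)⁻¹)⁻¹ := by
  have hp' : (2 : ℚ) ≤ p := by exact_mod_cast hp
  have h1 : (p : ℚ) - 1 ≠ 0 := by linarith
  rw [eulerFactor, Nat.cast_sub (by omega), Nat.cast_one]
  field_simp
  ring

lemma one_le_eulerProd (s : Finset ℕ) : 1 ≤ eulerProd s :=
  one_le_prod fun p _ => one_le_eulerFactor p

lemma eulerProd_pos (s : Finset ℕ) : 0 < eulerProd s :=
  zero_lt_one.trans_le (one_le_eulerProd s)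

lemma eulerProd_mono : Monotone eulerProd :=
  prod_mono_set_of_one_le one_le_eulerFactor

lemma eulerProd_union_le (s t : Finset ℕ) : eulerProd (s ∪ t) ≤ eulerProd s * eulerProd t := by
  rw [eulerProd, eulerProd, eulerProd, ← prod_union_inter]
  exact le_mul_of_one_le_right (eulerProd_pos _).le (one_le_eulerProd _)

lemma eulerProd_biUnion_le (s : Finset ℕ) (t : ℕ → Finset ℕ) :
    eulerProd (s.biUnion t) ≤ ∏ i ∈ s, eulerProd (t i) := by
  induction s using Finset.induction_on with
  | empty => simp [eulerProd]
  | insert i s hi ih =>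
    rw [biUnion_insert, prod_insert hi]
    exact (eulerProd_union_le _ _).trans (mul_le_mul_of_nonneg_left ih (eulerProd_pos _).le)

lemma cast_eq_totient_mul_eulerProd (N : ℕ) : (N : ℚ) = N.totient * eulerProd N.primeFactors := by
  have h_inv : eulerProd N.primeFactors = (∏ p ∈ N.primeFactors, (1 - (p : ℚ)⁻¹))⁻¹ := by
    rw [eulerProd, ← prod_inv_distrib]
    exact prod_congr rfl fun p hp => eulerFactor_eq_inv (Nat.prime_of_mem_primeFactors hp).two_le
  have h_ne : ∏ p ∈ N.primeFactors, (1 - (p : ℚ)⁻¹) ≠ 0 :=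
    inv_eq_zero.not.1 (h_inv ▸ (eulerProd_pos _).ne')
  rw [h_inv, Nat.totient_eq_mul_prod_factors, mul_inv_cancel_right₀ h_ne]

lemma eulerProd_le_prod_range {e : ℕ → ℕ} (he : StrictMono e) (he2 : 2 ≤ e 0) {s : Finset ℕ}
    (hs : ↑s ⊆ Set.range e) {B : ℕ} (hB : #s ≤ B) :
    eulerProd s ≤ ∏ i ∈ range B, eulerFactor (e i) := by
  have h_two : ∀ p ∈ Set.range e, p ∈ Set.Ici 2 := by
    rintro _ ⟨i, rfl⟩
    exact he2.trans (he.monotone i.zero_le)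
  have h_inv : MonotoneOn (fun p => (eulerFactor p)⁻¹) (Set.range e) := fun a ha b hb hab =>
    inv_anti₀ (eulerFactor_pos b) (eulerFactor_antitoneOn (h_two a ha) (h_two b hb) hab)
  have h_card : eulerProd s ≤ ∏ i ∈ range #s, eulerFactor (e i) := by
    have := prod_range_card_le_prod_of_subset_range he
      (fun p => (inv_pos.2 (eulerFactor_pos p)).le) h_inv hs
    rwa [prod_inv_distrib, prod_inv_distrib, ← eulerProd,
      inv_le_inv₀ (prod_pos fun i _ => eulerFactor_pos _) (eulerProd_pos s)] at this
  exact h_card.trans <| prod_le_prod_of_subset_of_one_le (range_subset_range.2 hB)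
    (fun i _ => (eulerFactor_pos _).le) fun i _ _ => one_le_eulerFactor _

lemma eulerProd_primeFactors_le {n k : ℕ} (hn : n ≠ 0)
    (h : n < ∏ i ∈ range (k + 1), Nat.nth Nat.Prime i) :
    eulerProd n.primeFactors ≤ ∏ i ∈ range k, eulerFactor (Nat.nth Nat.Prime i) := by
  have h_strictMono : StrictMono (Nat.nth Nat.Prime) :=
    Nat.nth_strictMono Nat.infinite_setOfPred_prime
  have h_range : ↑n.primeFactors ⊆ Set.range (Nat.nth Nat.Prime) := by
    rw [Nat.range_nth_of_infinite Nat.infinite_setOfPred_prime]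
    exact fun p hp => Nat.prime_of_mem_primeFactors hp
  refine eulerProd_le_prod_range h_strictMono (by simp) h_range ?_
  by_contra! h_card
  refine h.not_ge ?_
  calc ∏ i ∈ range (k + 1), Nat.nth Nat.Prime i
      ≤ ∏ i ∈ range #n.primeFactors, Nat.nth Nat.Prime i :=
        prod_le_prod_of_subset_of_one_le' (range_subset_range.2 h_card)
          fun i _ _ => (Nat.prime_nth_prime i).one_le
    _ ≤ ∏ p ∈ n.primeFactors, p :=
        prod_range_card_le_prod_of_subset_range h_strictMono (fun i => i.zero_le)
          monotoneOn_id h_range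
    _ ≤ n := Nat.le_of_dvd (Nat.pos_of_ne_zero hn) (Nat.prod_primeFactors_dvd n)

end EulerFactor

section PrimesOneMod

/-- The set of prime factors of `N` that are congruent to `1` modulo `r`. -/
def primesOneMod (N r : ℕ) : Finset ℕ := {p ∈ N.primeFactors | r ∣ p - 1}

/-- The product of the Euler factors of the first `B` terms of the progression
`2 * r + 1, 4 * r + 1, …`, which for odd `r` contains every odd prime congruent to `1` modulo
`r`. -/
def progressionProd (r B : ℕ) : ℚ := ∏ i ∈ range B, eulerFactor (2 * r * (i + 1) + 1)

lemma sum_factorization_primeFactors_le_one (N r : ℕ) :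
    ∑ p ∈ N.primeFactors, p.factorization r ≤ 1 := by
  calc ∑ p ∈ N.primeFactors, p.factorization r
      = ∑ p ∈ N.primeFactors, if p = r then 1 else 0 := by
        refine sum_congr rfl fun p hp => ?_
        rw [(Nat.prime_of_mem_primeFactors hp).factorization, Finsupp.single_apply]
    _ ≤ 1 := by
        rw [sum_ite_eq']
        split_ifs <;> simp

lemma card_primesOneMod_le_sum_factorization (N : ℕ) {r : ℕ} (hr : r.Prime) :
    #(primesOneMod N r) ≤ ∑ p ∈ N.primeFactors, (p - 1).factorization r := by
  rw [primesOneMod, card_filter]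
  refine sum_le_sum fun p hp => ?_
  have h_ne : p - 1 ≠ 0 := Nat.sub_ne_zero_of_lt (Nat.prime_of_mem_primeFactors hp).one_lt
  split_ifs with h
  · exact (hr.dvd_iff_one_le_factorization h_ne).1 h
  · exact Nat.zero_le _

lemma factorization_add_card_primesOneMod_le {N r : ℕ} (hN : N ≠ 0) (hr : r.Prime) :
    N.factorization r + #(primesOneMod N r) ≤ N.totient.factorization r + 1 := by
  have h_prime : ∀ p ∈ N.primeFactors, p.Prime := fun p => Nat.prime_of_mem_primeFactors
  have h_ne : ∀ p ∈ N.primeFactors, p ≠ 0 := fun p hp => (h_prime p hp).ne_zero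
  have h_pred : ∀ p ∈ N.primeFactors, p - 1 ≠ 0 := fun p hp =>
    Nat.sub_ne_zero_of_lt (h_prime p hp).one_lt
  have h_totient : N.totient ≠ 0 := (Nat.totient_pos.2 (Nat.pos_of_ne_zero hN)).ne'
  have h := congrArg (fun k : ℕ => k.factorization r) (Nat.totient_mul_prod_primeFactors N)
  simp only [Nat.factorization_mul h_totient (prod_ne_zero_iff.2 h_ne),
    Nat.factorization_mul hN (prod_ne_zero_iff.2 h_pred), Finsupp.add_apply,
    Nat.factorization_prod_apply h_ne, Nat.factorization_prod_apply h_pred] at h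
  have h_le_one := sum_factorization_primeFactors_le_one N r
  have h_card := card_primesOneMod_le_sum_factorization N hr
  omega

lemma primesOneMod_subset_range (N : ℕ) {r : ℕ} (hr : Odd r) (hr1 : r ≠ 1) :
    ↑(primesOneMod N r) ⊆ Set.range fun i => 2 * r * (i + 1) + 1 := by
  intro p hp
  obtain ⟨hpN, hrp⟩ := mem_filter.1 hp
  have hp_prime := Nat.prime_of_mem_primeFactors hpN
  have hp_ne_two : p ≠ 2 := by
    rintro rfl
    exact hr1 (Nat.dvd_one.1 hrp)
  have h_dvd : 2 * r ∣ p - 1 := (Nat.coprime_two_left.2 hr).mul_dvd_of_dvd_of_dvd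
    (hp_prime.even_sub_one hp_ne_two).two_dvd hrp
  obtain ⟨k, hk⟩ := h_dvd
  have hk0 : k ≠ 0 := by
    rintro rfl
    have := hp_prime.one_lt
    omega
  obtain ⟨i, rfl⟩ := Nat.exists_eq_succ_of_ne_zero hk0
  have := hp_prime.one_lt
  exact ⟨i, show 2 * r * (i + 1) + 1 = p by rw [← hk]; omega⟩

lemma eulerProd_primesOneMod_le {N r B : ℕ} (hr : Odd r) (hr1 : r ≠ 1)
    (hB : #(primesOneMod N r) ≤ B) : eulerProd (primesOneMod N r) ≤ progressionProd r B := by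
  have hr0 := hr.pos
  refine eulerProd_le_prod_range (e := fun i => 2 * r * (i + 1) + 1) ?_ ?_
    (primesOneMod_subset_range N hr hr1) hB
  · exact strictMono_nat_of_lt_succ fun i => by
      simpa using Nat.mul_lt_mul_of_pos_left (Nat.lt_succ_self (i + 1)) (by omega : 0 < 2 * r)
  · simp only [zero_add, mul_one]
    omega

lemma progressionProd_pos (r B : ℕ) : 0 < progressionProd r B :=
  prod_pos fun _ _ => eulerFactor_pos _

lemma progressionProd_anti {r s : ℕ} (hr : 0 < r) (hrs : r ≤ s) (B : ℕ) :
    progressionProd s B ≤ progressionProd r B := by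
  refine prod_le_prod (fun i _ => (eulerFactor_pos _).le) fun i _ => ?_
  have h_pos : 0 < 2 * r * (i + 1) := by positivity
  have h_le : 2 * r * (i + 1) ≤ 2 * s * (i + 1) := by gcongr
  exact eulerFactor_antitoneOn (Set.mem_Ici.2 (by omega)) (Set.mem_Ici.2 (by omega)) (by omega)

lemma progressionProd_mul_one_sub_harmonic_le {r : ℕ} (hr : 0 < r) (B : ℕ) :
    progressionProd r B * (1 - harmonic B / (2 * r)) ≤ 1 := by
  induction B with
  | zero => simp [progressionProd]
  | succ B ih =>
    have h_harmonic : harmonic (B + 1) / (2 * r) =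
        harmonic B / (2 * r) + 1 / (2 * r * (B + 1)) := by
      rw [harmonic_succ]
      push_cast
      field_simp
    have h_prod : progressionProd r (B + 1) =
        progressionProd r B * (1 + 1 / (2 * r * (B + 1))) := by
      rw [progressionProd, prod_range_succ, ← progressionProd, eulerFactor, Nat.add_sub_cancel]
      push_cast
      rw [one_div]
    have h_nonneg : 0 ≤ harmonic B / (2 * r) := by
      unfold harmonic
      positivity
    rw [h_prod, h_harmonic]
    set h := harmonic B / (2 * r)
    set c : ℚ := 1 / (2 * r * (B + 1))
    have : 0 ≤ c := by positivity
    calc progressionProd r B * (1 + c) * (1 - (h + c))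
        = progressionProd r B * (1 - h) - progressionProd r B * (c * (h + c)) := by ring
      _ ≤ 1 - 0 := by
        have := (progressionProd_pos r B).le
        gcongr
        positivity
      _ = 1 := sub_zero 1

lemma harmonic_le_div_six_add_two {n : ℕ} (hn : 5 ≤ n) : harmonic n ≤ n / 6 + 2 := by
  induction n, hn using Nat.le_induction with
  | base => norm_num [harmonic_succ]
  | succ n hn ih =>
    have : ((n + 1 : ℕ) : ℚ)⁻¹ ≤ 6⁻¹ := by
      gcongr
      exact_mod_cast Nat.succ_le_succ hn
    rw [harmonic_succ]
    push_cast at *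
    linarith

/-- The bound `r / (r - 1) * (1 + 1 / (2 * r))` for the Euler factors of a prime `r` and of a
single further prime congruent to `1` modulo `r`. -/
def tailFactor (r : ℕ) : ℚ := eulerFactor r * progressionProd r 1

lemma tailFactor_antitoneOn : AntitoneOn tailFactor (Set.Ici 2) := by
  intro r hr s hs hrs
  exact mul_le_mul (eulerFactor_antitoneOn hr hs hrs)
    (progressionProd_anti (zero_lt_two.trans_le hr) hrs 1) (progressionProd_pos s 1).le
    (eulerFactor_pos r).le

lemma one_le_tailFactor (r : ℕ) : 1 ≤ tailFactor r :=
  one_le_mul_of_one_le_of_one_le (one_le_eulerFactor r)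
    (one_le_prod fun _ _ => one_le_eulerFactor _)

lemma tailFactor_eq {r : ℕ} (hr : 2 ≤ r) : tailFactor r = (2 * r + 1) / (2 * (r - 1)) := by
  have hr' : (2 : ℚ) ≤ r := by exact_mod_cast hr
  have h_ne : (r : ℚ) - 1 ≠ 0 := by linarith
  rw [tailFactor, progressionProd, prod_range_one, eulerFactor, eulerFactor, Nat.add_sub_cancel,
    Nat.cast_sub (by omega)]
  push_cast
  field_simp
  ring

lemma progressionProd_six_le_tailFactor {r : ℕ} (hr : 3 ≤ r) :
    progressionProd r 6 ≤ tailFactor r := by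
  have hr' : (3 : ℚ) ≤ r := by exact_mod_cast hr
  have h_harmonic : harmonic 6 = 49 / 20 := by norm_num [harmonic_succ]
  have h := progressionProd_mul_one_sub_harmonic_le (by omega : 0 < r) 6
  have h_pos : 0 < 1 - (49 / 20 : ℚ) / (2 * r) := by
    rw [sub_pos, div_lt_one (by positivity)]
    linarith
  rw [h_harmonic] at h
  refine le_of_mul_le_mul_right (h.trans ?_) h_pos
  rw [tailFactor_eq (by omega), one_sub_div (by positivity), div_mul_div_comm,
    one_le_div (mul_pos (by linarith) (by linarith))]
  nlinarith

lemma progressionProd_self_le {r : ℕ} (hr : 36 ≤ r) : progressionProd r r ≤ 9 / 8 := by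
  have hr' : (36 : ℚ) ≤ r := by exact_mod_cast hr
  have h_harmonic : harmonic r / (2 * r) ≤ 1 / 9 := by
    rw [div_le_iff₀ (by positivity)]
    linarith [harmonic_le_div_six_add_two (by omega : 5 ≤ r)]
  have h := progressionProd_mul_one_sub_harmonic_le (by omega : 0 < r) r
  refine le_of_mul_le_mul_right (h.trans ?_) (by linarith : 0 < 1 - harmonic r / (2 * r))
  linarith

end PrimesOneMod

section GeomSum

/-- The homogeneous geometric sum with `m` terms, equal to `(X ^ m - Y ^ m) / (X - Y)` for
`Y < X`. -/
def geomSum₂ (X Y m : ℕ) : ℕ := ∑ i ∈ range m, X ^ i * Y ^ (m - 1 - i)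

variable {X Y : ℕ}

lemma geomSum₂_mul_sub (h : Y ≤ X) (m : ℕ) : geomSum₂ X Y m * (X - Y) = X ^ m - Y ^ m :=
  geom_sum₂_mul_of_ge h m

lemma geomSum₂_eq_div (h : Y < X) (m : ℕ) : geomSum₂ X Y m = (X ^ m - Y ^ m) / (X - Y) := by
  rw [← geomSum₂_mul_sub h.le, Nat.mul_div_cancel _ (Nat.sub_pos_of_lt h)]

lemma geomSum₂_mul_mul (d X Y m : ℕ) :
    geomSum₂ (d * X) (d * Y) m = d ^ (m - 1) * geomSum₂ X Y m := by
  rw [geomSum₂, geomSum₂, mul_sum]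
  refine sum_congr rfl fun i hi => ?_
  have h_exp : m - 1 = i + (m - 1 - i) := by
    have := mem_range.1 hi
    omega
  rw [mul_pow, mul_pow, mul_mul_mul_comm, ← pow_add, ← h_exp]

lemma geomSum₂_succ (X Y m : ℕ) : geomSum₂ X Y (m + 1) = X * geomSum₂ X Y m + Y ^ m := by
  rw [geomSum₂, sum_range_succ', geomSum₂, mul_sum]
  congr 1
  · refine sum_congr rfl fun i _ => ?_
    rw [pow_succ', mul_assoc, Nat.add_sub_cancel, Nat.sub_add_eq, Nat.sub_right_comm]
  · simp

lemma pow_le_geomSum₂ (X Y : ℕ) {m : ℕ} (hm : m ≠ 0) : X ^ (m - 1) ≤ geomSum₂ X Y m := by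
  have := single_le_sum (f := fun i => X ^ i * Y ^ (m - 1 - i)) (fun i _ => Nat.zero_le _)
    (mem_range.2 (Nat.sub_one_lt hm))
  simpa [geomSum₂] using this

lemma geomSum₂_ne_zero (hX : 0 < X) (Y : ℕ) {m : ℕ} (hm : m ≠ 0) : geomSum₂ X Y m ≠ 0 :=
  ((Nat.pow_pos hX).trans_le (pow_le_geomSum₂ X Y hm)).ne'

lemma mul_geomSum₂_lt_geomSum₂ (hY : 0 < Y) (hX : 0 < X) {n m : ℕ} (hnm : n < m) :
    X * geomSum₂ X Y n < geomSum₂ X Y m := by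
  have h_mono : Monotone (geomSum₂ X Y) := monotone_nat_of_le_succ fun k => by
    rw [geomSum₂_succ]
    exact (Nat.le_mul_of_pos_left _ hX).trans (Nat.le_add_right _ _)
  calc X * geomSum₂ X Y n < X * geomSum₂ X Y n + Y ^ n := Nat.lt_add_of_pos_right (Nat.pow_pos hY)
    _ = geomSum₂ X Y (n + 1) := (geomSum₂_succ X Y n).symm
    _ ≤ geomSum₂ X Y m := h_mono hnm

lemma lt_geomSum₂ (hY : 0 < Y) (h : Y < X) {m : ℕ} (hm : 2 ≤ m) : m < geomSum₂ X Y m := by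
  induction m, hm using Nat.le_induction with
  | base =>
    have : geomSum₂ X Y 2 = Y + X := by simp [geomSum₂, sum_range_succ]
    omega
  | succ m hm ih =>
    have := mul_geomSum₂_lt_geomSum₂ hY (hY.trans h) (Nat.lt_succ_self m)
    nlinarith

lemma dvd_pow_sub_pow_of_dvd_geomSum₂ (h : Y ≤ X) {P m : ℕ} (hP : P ∣ geomSum₂ X Y m) :
    P ∣ X ^ m - Y ^ m :=
  geomSum₂_mul_sub h m ▸ hP.mul_right _

lemma prime_dvd_of_dvd_geomSum₂ {P m : ℕ} (hP : P.Prime) (h : Y ≤ X) (hX : ¬P ∣ X)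
    (h_sub : P ∣ X - Y) (h_sum : P ∣ geomSum₂ X Y m) : P ∣ m := by
  by_contra hm
  rw [← Int.natCast_dvd_natCast, Nat.cast_sub h] at h_sub
  refine not_dvd_geom_sum₂ (Nat.prime_iff_prime_int.1 hP) h_sub
    (mt Int.natCast_dvd_natCast.1 hX) (mt Int.natCast_dvd_natCast.1 hm) ?_
  rw [← Int.natCast_dvd_natCast] at h_sum
  simpa [geomSum₂] using h_sum

lemma pow_dvd_sub_of_pow_dvd_pow_sub_pow {P c k : ℕ} (hP : P.Prime) (h : Y ≤ X) (hX : ¬P ∣ X)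
    (h_sub : P ∣ X - Y) (hc : ¬P ∣ c) (hk : P ^ k ∣ X ^ c - Y ^ c) : P ^ k ∣ X - Y := by
  have h_coprime : (P ^ k).Coprime (geomSum₂ X Y c) := Nat.Coprime.pow_left k <|
    hP.coprime_iff_not_dvd.2 fun h_sum => hc (prime_dvd_of_dvd_geomSum₂ hP h hX h_sub h_sum)
  exact h_coprime.dvd_of_dvd_mul_left (geomSum₂_mul_sub h c ▸ hk)

lemma pow_dvd_mul_sub_of_pow_dvd_pow_sub_pow {P c k : ℕ} (hP : P.Prime) (h : Y ≤ X)
    (hX : ¬P ∣ X) (h_sub : P ∣ X - Y) (hc : Odd c) (hk : P ^ k ∣ X ^ c - Y ^ c) :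
    P ^ k ∣ c * (X - Y) := by
  rcases hP.eq_two_or_odd' with rfl | h_odd
  · exact (pow_dvd_sub_of_pow_dvd_pow_sub_pow hP h hX h_sub hc.not_two_dvd_nat hk).mul_left c
  · rw [pow_dvd_iff_le_emultiplicity] at hk ⊢
    rwa [emultiplicity_mul hP.prime, add_comm, ← Nat.emultiplicity_pow_sub_pow hP h_odd h_sub hX]

end GeomSum

section RatioOrder

/-- The multiplicative order of `X / Y` modulo `P`: the least `a > 0` with `P ∣ X ^ a - Y ^ a` if
`P` is a prime dividing neither `X` nor `Y`. -/
noncomputable def ratioOrder (P X Y : ℕ) : ℕ := orderOf ((X : ZMod P) * (Y : ZMod P)⁻¹)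

variable {P X Y : ℕ}

lemma dvd_pow_sub_pow_iff_ratioOrder_dvd (hP : P.Prime) (h : Y ≤ X) (hY : ¬P ∣ Y) (a : ℕ) :
    P ∣ X ^ a - Y ^ a ↔ ratioOrder P X Y ∣ a := by
  have := Fact.mk hP
  have hY' : (Y : ZMod P) ≠ 0 := by rwa [Ne, ZMod.natCast_eq_zero_iff]
  rw [ratioOrder, ← div_eq_mul_inv, orderOf_dvd_iff_pow_eq_one, div_pow,
    div_eq_one_iff_eq (pow_ne_zero _ hY'), ← ZMod.natCast_eq_zero_iff,
    Nat.cast_sub (Nat.pow_le_pow_left h a), sub_eq_zero, Nat.cast_pow, Nat.cast_pow]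

lemma ratioOrder_dvd_sub_one (hP : P.Prime) (hX : ¬P ∣ X) (hY : ¬P ∣ Y) :
    ratioOrder P X Y ∣ P - 1 := by
  have := Fact.mk hP
  refine ZMod.orderOf_dvd_card_sub_one (mul_ne_zero ?_ (inv_ne_zero ?_)) <;>
    rwa [Ne, ZMod.natCast_eq_zero_iff]

lemma not_dvd_of_dvd_pow_sub_pow (hc : X.Coprime Y) (h : Y ≤ X) (hP : P.Prime) {a : ℕ}
    (ha : a ≠ 0) (h_dvd : P ∣ X ^ a - Y ^ a) : ¬P ∣ X ∧ ¬P ∣ Y := by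
  have h_pow : P ∣ Y ^ a ↔ P ∣ X ^ a := by
    rw [Nat.dvd_add_iff_right h_dvd, Nat.sub_add_cancel (Nat.pow_le_pow_left h a)]
  rw [hP.prime.dvd_pow_iff_dvd ha, hP.prime.dvd_pow_iff_dvd ha] at h_pow
  have h_not : ¬(P ∣ X ∧ P ∣ Y) := fun hXY => hP.not_dvd_one (hc ▸ Nat.dvd_gcd hXY.1 hXY.2)
  tauto

lemma pow_dvd_pow_sub_one_sub_pow_sub_one (hc : X.Coprime Y) (h : Y ≤ X) (hP : P.Prime)
    {n k : ℕ} (hn : ¬P ∣ n) (hk : P ^ k ∣ X ^ n - Y ^ n) :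
    P ^ k ∣ X ^ (P - 1) - Y ^ (P - 1) := by
  rcases eq_or_ne k 0 with rfl | hk0
  · simp
  have hn0 : n ≠ 0 := by
    rintro rfl
    exact hn (dvd_zero P)
  obtain ⟨hX, hY⟩ := not_dvd_of_dvd_pow_sub_pow hc h hP hn0 ((dvd_pow_self P hk0).trans hk)
  have h_fermat : P ∣ X ^ (P - 1) - Y ^ (P - 1) :=
    (dvd_pow_sub_pow_iff_ratioOrder_dvd hP h hY _).2 (ratioOrder_dvd_sub_one hP hX hY)
  refine pow_dvd_sub_of_pow_dvd_pow_sub_pow hP (Nat.pow_le_pow_left h _)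
    (mt hP.dvd_of_dvd_pow hX) h_fermat hn (hk.trans ?_)
  rw [← pow_mul, ← pow_mul, mul_comm, pow_mul, pow_mul]
  exact Nat.sub_dvd_pow_sub_pow _ _ _

end RatioOrder

section PrimitiveDivisors

variable {X Y : ℕ}

lemma pow_sub_pow_dvd_prod_of_forall_ratioOrder_ne (hc : X.Coprime Y) (h : Y ≤ X) {n : ℕ}
    (hn : Odd n) (h_ne : ∀ P : ℕ, P.Prime → ¬P ∣ X → ¬P ∣ Y → ratioOrder P X Y ≠ n) :
    X ^ n - Y ^ n ∣ ∏ p ∈ n.primeFactors, p * (X ^ (n / p) - Y ^ (n / p)) := by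
  have hn0 : n ≠ 0 := hn.pos.ne'
  refine (Nat.dvd_iff_prime_pow_dvd_dvd _ _).2 fun P k hP hk => ?_
  rcases eq_or_ne k 0 with rfl | hk0
  · simp
  have hPn : P ∣ X ^ n - Y ^ n := (dvd_pow_self P hk0).trans hk
  obtain ⟨hX, hY⟩ := not_dvd_of_dvd_pow_sub_pow hc h hP hn0 hPn
  obtain ⟨c, hcn⟩ := (dvd_pow_sub_pow_iff_ratioOrder_dvd hP h hY n).1 hPn
  have hc1 : c ≠ 1 := by
    rintro rfl
    exact h_ne P hP hX hY (by rw [hcn, mul_one])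
  obtain ⟨p, hp, hpc⟩ := Nat.exists_prime_and_dvd hc1
  have hpn : p ∣ n := hcn ▸ hpc.mul_left _
  have h_sub : P ∣ X ^ (n / p) - Y ^ (n / p) := by
    rw [dvd_pow_sub_pow_iff_ratioOrder_dvd hP h hY]
    exact ⟨c / p, by rw [← Nat.mul_div_assoc _ hpc, ← hcn]⟩
  refine Dvd.dvd.trans ?_ (dvd_prod_of_mem _ (Nat.mem_primeFactors.2 ⟨hp, hpn, hn0⟩))
  refine pow_dvd_mul_sub_of_pow_dvd_pow_sub_pow hP (Nat.pow_le_pow_left h _)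
    (mt hP.dvd_of_dvd_pow hX) h_sub (hn.of_dvd_nat hpn) ?_
  rwa [← pow_mul, ← pow_mul, Nat.div_mul_cancel hpn]

lemma exists_ratioOrder_eq_prime (hc : X.Coprime Y) (hY : 0 < Y) (h : Y < X) {q : ℕ}
    (hq : q.Prime) (hq2 : Odd q) :
    ∃ P : ℕ, P.Prime ∧ ¬P ∣ X ∧ ¬P ∣ Y ∧ ratioOrder P X Y = q := by
  by_contra! h_ne
  have h_dvd := pow_sub_pow_dvd_prod_of_forall_ratioOrder_ne hc h.le hq2 h_ne
  rw [hq.primeFactors, prod_singleton, Nat.div_self hq.pos, pow_one, pow_one,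
    ← geomSum₂_mul_sub h.le, Nat.mul_dvd_mul_iff_right (Nat.sub_pos_of_lt h)] at h_dvd
  exact (lt_geomSum₂ hY h hq.two_le).not_ge (Nat.le_of_dvd hq.pos h_dvd)

lemma mul_mul_pow_add_lt_pow {q r : ℕ} (hq : 3 ≤ q) (hr : 5 ≤ r) (hX : 2 ≤ X) :
    q * r * X ^ (q + r) < X ^ (q * r - 1) := by
  obtain ⟨a, ha⟩ : ∃ a, q * r = q + r + a + 1 := ⟨q * r - (q + r + 1), by
    have : q + r + 1 ≤ q * r := by nlinarith
    omega⟩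
  have ha6 : 6 ≤ a := by nlinarith
  have h_le : q * r ≤ 2 * a + 4 := by nlinarith
  have h_pow : 2 * a + 4 < 2 ^ a := by
    clear ha h_le
    induction a, ha6 using Nat.le_induction with
    | base => norm_num
    | succ a _ ih =>
      rw [pow_succ]
      omega
  calc q * r * X ^ (q + r) < X ^ a * X ^ (q + r) := by
        have : 2 ^ a ≤ X ^ a := Nat.pow_le_pow_left hX a
        exact Nat.mul_lt_mul_of_pos_right (by omega) (Nat.pow_pos (by omega))
    _ = X ^ (q * r - 1) := by rw [← pow_add, ha, Nat.add_sub_cancel, add_comm]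

lemma exists_ratioOrder_eq_mul (hc : X.Coprime Y) (hY : 0 < Y) (h : Y < X) {q r : ℕ}
    (hq : q.Prime) (hr : r.Prime) (hq2 : Odd q) (hqr : q < r) :
    ∃ P : ℕ, P.Prime ∧ ¬P ∣ X ∧ ¬P ∣ Y ∧ ratioOrder P X Y = q * r := by
  have hr2 : Odd r := hr.odd_of_ne_two fun hr2 => by
    have := hq.two_le
    omega
  have hq3 : 3 ≤ q := by
    have := hq.two_le
    obtain ⟨a, rfl⟩ := hq2
    omega
  have hr5 : 5 ≤ r := by
    obtain ⟨a, rfl⟩ := hr2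
    omega
  have hqr0 : q * r ≠ 0 := mul_ne_zero hq.ne_zero hr.ne_zero
  by_contra! h_ne
  have h_dvd := pow_sub_pow_dvd_prod_of_forall_ratioOrder_ne hc h.le (hq2.mul hr2) h_ne
  rw [Nat.primeFactors_mul hq.ne_zero hr.ne_zero, hq.primeFactors, hr.primeFactors,
    prod_union (by simpa using hqr.ne), prod_singleton, prod_singleton,
    Nat.mul_div_cancel_left _ hq.pos, Nat.mul_div_cancel _ hr.pos] at h_dvd
  have h_pos : ∀ a, a ≠ 0 → 0 < X ^ a - Y ^ a := fun a ha =>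
    Nat.sub_pos_of_lt (Nat.pow_lt_pow_left h ha)
  refine (mul_mul_pow_add_lt_pow hq3 hr5 (by omega : 2 ≤ X)).not_ge ?_
  calc X ^ (q * r - 1) ≤ geomSum₂ X Y (q * r) := pow_le_geomSum₂ X Y hqr0
    _ ≤ X ^ (q * r) - Y ^ (q * r) := by
        rw [← geomSum₂_mul_sub h.le]
        exact Nat.le_mul_of_pos_right _ (Nat.sub_pos_of_lt h)
    _ ≤ q * (X ^ r - Y ^ r) * (r * (X ^ q - Y ^ q)) :=
        Nat.le_of_dvd (Nat.mul_pos (Nat.mul_pos hq.pos (h_pos r hr.ne_zero))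
          (Nat.mul_pos hr.pos (h_pos q hq.ne_zero))) h_dvd
    _ ≤ q * X ^ r * (r * X ^ q) := by
        gcongr <;> exact Nat.sub_le _ _
    _ = q * r * X ^ (q + r) := by ring

lemma exists_ratioOrder_eq_lcm (hc : X.Coprime Y) (hY : 0 < Y) (h : Y < X) {q r : ℕ}
    (hq : q.Prime) (hr : r.Prime) (hq2 : Odd q) (hr2 : Odd r) :
    ∃ P : ℕ, P.Prime ∧ ¬P ∣ X ∧ ¬P ∣ Y ∧ ratioOrder P X Y = q.lcm r := by
  rcases lt_trichotomy q r with hqr | rfl | hqr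
  · rw [((Nat.coprime_primes hq hr).2 hqr.ne).lcm_eq_mul]
    exact exists_ratioOrder_eq_mul hc hY h hq hr hq2 hqr
  · rw [Nat.lcm_self]
    exact exists_ratioOrder_eq_prime hc hY h hq hq2
  · rw [Nat.lcm_comm, ((Nat.coprime_primes hr hq).2 hqr.ne).lcm_eq_mul]
    exact exists_ratioOrder_eq_mul hc hY h hr hq hr2 hqr

end PrimitiveDivisors

section Reduced

/-- The value `z * (x ^ m - y ^ m) / (x - y)` for `x = d * X` and `y = d * Y`. -/
def scaledSum (X Y d z m : ℕ) : ℕ := z * geomSum₂ (d * X) (d * Y) m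

/-- A solution of `φ (z * (x ^ m - y ^ m) / (x - y)) = z * (x ^ n - y ^ n) / (x - y)` in which the
greatest common divisor `d` of `x = d * X` and `y = d * Y` has been split off. -/
structure ReducedSolution (X Y d z m n : ℕ) : Prop where
  coprime : X.Coprime Y
  right_pos : 0 < Y
  lt : Y < X
  scale_pos : 0 < d
  factor_pos : 0 < z
  factor_le : z ≤ d * (X - Y)
  exponent_pos : 0 < n
  exponent_lt : n < m
  exponent_coprime : m.Coprime n
  totient_eq : (scaledSum X Y d z m).totient = scaledSum X Y d z n

/-- The primes that a prime factor `r` of the exponent accounts for among the prime factors of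
`N = scaledSum X Y d z m`: those congruent to `1` modulo `r`, and `r` itself if `r ∣ X - Y`. -/
def attachedPrimes (X Y N r : ℕ) : Finset ℕ := primesOneMod N r ∪ {p ∈ ({r} : Finset ℕ) | p ∣ X - Y}

variable {X Y d z m n r : ℕ}

lemma scaledSum_eq (X Y d z m : ℕ) :
    scaledSum X Y d z m = z * (d ^ (m - 1) * geomSum₂ X Y m) := by
  rw [scaledSum, geomSum₂_mul_mul]

lemma attachedPrimes_eq_primesOneMod (N : ℕ) (hr : ¬r ∣ X - Y) :
    attachedPrimes X Y N r = primesOneMod N r := by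
  simp [attachedPrimes, filter_singleton, hr]

lemma eulerProd_attachedPrimes_le_tailFactor {N : ℕ} (hr : Odd r) (hr1 : r ≠ 1)
    (h_card : #(primesOneMod N r) ≤ 1) : eulerProd (attachedPrimes X Y N r) ≤ tailFactor r := by
  have h_self : eulerProd {p ∈ ({r} : Finset ℕ) | p ∣ X - Y} ≤ eulerFactor r :=
    (eulerProd_mono (filter_subset _ _)).trans_eq (prod_singleton _ _)
  rw [attachedPrimes, union_comm]
  exact (eulerProd_union_le _ _).trans <| mul_le_mul h_self
    (eulerProd_primesOneMod_le hr hr1 h_card) (eulerProd_pos _).le (eulerFactor_pos r).le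

namespace ReducedSolution

lemma left_pos (h : ReducedSolution X Y d z m n) : 0 < X :=
  h.right_pos.trans h.lt

lemma exponent_ne_zero (h : ReducedSolution X Y d z m n) : m ≠ 0 :=
  (h.exponent_pos.trans h.exponent_lt).ne'

lemma scaledSum_ne_zero (h : ReducedSolution X Y d z m n) {k : ℕ} (hk : k ≠ 0) :
    scaledSum X Y d z k ≠ 0 :=
  mul_ne_zero h.factor_pos.ne' (geomSum₂_ne_zero (Nat.mul_pos h.scale_pos h.left_pos) _ hk)

lemma mul_lt_eulerProd (h : ReducedSolution X Y d z m n) :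
    (d * X : ℚ) < eulerProd (scaledSum X Y d z m).primeFactors := by
  have h_pos : (0 : ℚ) < scaledSum X Y d z n := by
    exact_mod_cast Nat.pos_of_ne_zero (h.scaledSum_ne_zero h.exponent_pos.ne')
  have h_lt : d * X * scaledSum X Y d z n < scaledSum X Y d z m := by
    rw [scaledSum, scaledSum, mul_left_comm]
    exact Nat.mul_lt_mul_of_pos_left (mul_geomSum₂_lt_geomSum₂
      (Nat.mul_pos h.scale_pos h.right_pos) (Nat.mul_pos h.scale_pos h.left_pos) h.exponent_lt)
      h.factor_pos
  refine lt_of_mul_lt_mul_left ?_ h_pos.le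
  rw [← h.totient_eq, ← cast_eq_totient_mul_eulerProd, h.totient_eq, mul_comm]
  exact_mod_cast h_lt

lemma card_primesOneMod_le (h : ReducedSolution X Y d z m n) (hr : r.Prime) :
    #(primesOneMod (scaledSum X Y d z m) r) ≤ (geomSum₂ X Y n).factorization r + 1 := by
  have h_factorization : ∀ k, k ≠ 0 → (scaledSum X Y d z k).factorization r =
      z.factorization r + ((k - 1) * d.factorization r + (geomSum₂ X Y k).factorization r) := by
    intro k hk
    have h_sum := geomSum₂_ne_zero h.left_pos Y hk
    have h_pow := pow_ne_zero (k - 1) h.scale_pos.ne'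
    rw [scaledSum_eq, Nat.factorization_mul h.factor_pos.ne' (mul_ne_zero h_pow h_sum),
      Nat.factorization_mul h_pow h_sum, Nat.factorization_pow]
    rfl
  have h_le := factorization_add_card_primesOneMod_le (h.scaledSum_ne_zero h.exponent_ne_zero) hr
  rw [h.totient_eq, h_factorization m h.exponent_ne_zero,
    h_factorization n h.exponent_pos.ne'] at h_le
  have h_mono : (n - 1) * d.factorization r ≤ (m - 1) * d.factorization r :=
    Nat.mul_le_mul_right _ (Nat.sub_le_sub_right h.exponent_lt.le 1)
  omega

lemma primeFactors_subset (h : ReducedSolution X Y d z m n) :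
    (scaledSum X Y d z m).primeFactors ⊆ (z * d).primeFactors ∪
      m.primeFactors.biUnion (attachedPrimes X Y (scaledSum X Y d z m)) := by
  intro p hpN
  obtain ⟨hp, hp_dvd, -⟩ := Nat.mem_primeFactors.1 hpN
  rw [scaledSum_eq, hp.dvd_mul, hp.dvd_mul] at hp_dvd
  rw [mem_union]
  have h_zd : p ∣ z * d → p ∈ (z * d).primeFactors := fun hp_zd =>
    Nat.mem_primeFactors.2 ⟨hp, hp_zd, (Nat.mul_pos h.factor_pos h.scale_pos).ne'⟩
  rcases hp_dvd with hpz | hpd | hp_sum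
  · exact Or.inl (h_zd (hpz.mul_right d))
  · exact Or.inl (h_zd ((hp.dvd_of_dvd_pow hpd).mul_left z))
  right
  have hp_sub := dvd_pow_sub_pow_of_dvd_geomSum₂ h.lt.le hp_sum
  obtain ⟨hpX, hpY⟩ := not_dvd_of_dvd_pow_sub_pow h.coprime h.lt.le hp h.exponent_ne_zero hp_sub
  have h_order := dvd_pow_sub_pow_iff_ratioOrder_dvd hp h.lt.le hpY
  rw [mem_biUnion]
  rcases eq_or_ne (ratioOrder p X Y) 1 with h_one | h_ne_one
  · have hp_diff : p ∣ X - Y := by simpa using (h_order 1).2 h_one.dvd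
    have hpm := prime_dvd_of_dvd_geomSum₂ hp h.lt.le hpX hp_diff hp_sum
    exact ⟨p, Nat.mem_primeFactors.2 ⟨hp, hpm, h.exponent_ne_zero⟩,
      mem_union_right _ (mem_filter.2 ⟨mem_singleton_self p, hp_diff⟩)⟩
  · obtain ⟨r, hr, hr_order⟩ := Nat.exists_prime_and_dvd h_ne_one
    exact ⟨r, Nat.mem_primeFactors.2 ⟨hr, hr_order.trans ((h_order m).1 hp_sub),
        h.exponent_ne_zero⟩,
      mem_union_left _ (mem_filter.2 ⟨hpN, hr_order.trans (ratioOrder_dvd_sub_one hp hpX hpY)⟩)⟩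

lemma exists_mem_primesOneMod (h : ReducedSolution X Y d z m n) (hm : Odd m) {q : ℕ}
    (hq : q ∈ m.primeFactors) (hr : r ∈ m.primeFactors) :
    ∃ P ∈ primesOneMod (scaledSum X Y d z m) q, ratioOrder P X Y = q.lcm r := by
  obtain ⟨hq, hqm, -⟩ := Nat.mem_primeFactors.1 hq
  obtain ⟨hr, hrm, -⟩ := Nat.mem_primeFactors.1 hr
  obtain ⟨P, hP, hPX, hPY, h_order⟩ := exists_ratioOrder_eq_lcm h.coprime h.right_pos h.lt hq hr
    (hm.of_dvd_nat hqm) (hm.of_dvd_nat hrm)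
  have hq_order : q ∣ ratioOrder P X Y := h_order ▸ Nat.dvd_lcm_left q r
  have hP_iff := dvd_pow_sub_pow_iff_ratioOrder_dvd hP h.lt.le hPY
  have hP_sum : P ∣ geomSum₂ X Y m := by
    have hP_mul : P ∣ geomSum₂ X Y m * (X - Y) := by
      rw [geomSum₂_mul_sub h.lt.le, hP_iff, h_order]
      exact Nat.lcm_dvd hqm hrm
    refine (hP.dvd_mul.1 hP_mul).resolve_right fun hP_diff => hq.not_dvd_one ?_
    exact hq_order.trans ((hP_iff 1).1 (by simpa using hP_diff))
  have hP_scaledSum : P ∣ scaledSum X Y d z m := by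
    rw [scaledSum_eq]
    exact (hP_sum.mul_left _).mul_left z
  exact ⟨P, mem_filter.2 ⟨Nat.mem_primeFactors.2 ⟨hP, hP_scaledSum,
    h.scaledSum_ne_zero h.exponent_ne_zero⟩,
    hq_order.trans (ratioOrder_dvd_sub_one hP hPX hPY)⟩, h_order⟩

lemma card_primeFactors_le_card_primesOneMod (h : ReducedSolution X Y d z m n) (hm : Odd m)
    {q : ℕ} (hq : q ∈ m.primeFactors) :
    #m.primeFactors ≤ #(primesOneMod (scaledSum X Y d z m) q) := by
  choose! P hP h_order using fun r (hr : r ∈ m.primeFactors) => h.exists_mem_primesOneMod hm hq hr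
  refine card_le_card_of_injOn P hP fun r hr s hs hrs => ?_
  have h_lcm : q.lcm r = q.lcm s := by rw [← h_order r hr, ← h_order s hs, hrs]
  have h_eq_or : ∀ {r s}, r ∈ m.primeFactors → s ∈ m.primeFactors → q.lcm r = q.lcm s →
      r = q ∨ r = s := by
    intro r s hr hs h_lcm
    have hr' := Nat.prime_of_mem_primeFactors hr
    have hr_dvd : r ∣ q * s := ((Nat.dvd_lcm_right q r).trans h_lcm.dvd).trans (Nat.lcm_dvd_mul q s)
    exact (hr'.dvd_mul.1 hr_dvd).imp
      (Nat.prime_dvd_prime_iff_eq hr' (Nat.prime_of_mem_primeFactors hq)).1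
      (Nat.prime_dvd_prime_iff_eq hr' (Nat.prime_of_mem_primeFactors hs)).1
  rcases h_eq_or hr hs h_lcm with rfl | h_eq
  · exact ((h_eq_or hs hr h_lcm.symm).elim id id).symm
  · exact h_eq

end ReducedSolution

end Reduced

section Valuation

variable {X Y n r k : ℕ}

lemma not_dvd_geomSum₂_of_dvd_sub (hc : X.Coprime Y) (h : Y ≤ X) (hr : r.Prime) (hn : ¬r ∣ n)
    (h_sub : r ∣ X - Y) : ¬r ∣ geomSum₂ X Y n := by
  intro h_sum
  have hX := (not_dvd_of_dvd_pow_sub_pow hc h hr one_ne_zero (by simpa using h_sub)).1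
  exact hn (prime_dvd_of_dvd_geomSum₂ hr h hX h_sub h_sum)

lemma pow_factorization_geomSum₂_dvd (hc : X.Coprime Y) (h : Y ≤ X) (hr : r.Prime)
    (hn : ¬r ∣ n) : r ^ (geomSum₂ X Y n).factorization r ∣ X ^ (r - 1) - Y ^ (r - 1) :=
  pow_dvd_pow_sub_one_sub_pow_sub_one hc h hr hn <|
    dvd_pow_sub_pow_of_dvd_geomSum₂ h (Nat.ordProj_dvd _ _)

lemma lt_sub_one_of_pow_dvd (h : Y < X) (hXr : X < r) (hr : 2 ≤ r)
    (hk : r ^ k ∣ X ^ (r - 1) - Y ^ (r - 1)) : k < r - 1 := by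
  have hr1 : r - 1 ≠ 0 := by omega
  refine (Nat.pow_lt_pow_iff_right hr).1 ?_
  calc r ^ k ≤ X ^ (r - 1) - Y ^ (r - 1) :=
        Nat.le_of_dvd (Nat.sub_pos_of_lt (Nat.pow_lt_pow_left h hr1)) hk
    _ ≤ X ^ (r - 1) := Nat.sub_le _ _
    _ < r ^ (r - 1) := Nat.pow_lt_pow_left hXr hr1

lemma pow_dvd_add_of_pow_dvd_sq_sub_sq (hr : r.Prime) (h_sub : ¬r ∣ X - Y)
    (hk : r ^ k ∣ X ^ 2 - Y ^ 2) : r ^ k ∣ X + Y := by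
  rw [Nat.sq_sub_sq] at hk
  exact ((hr.coprime_iff_not_dvd.2 h_sub).pow_left k).dvd_of_dvd_mul_right hk

-- The first congruence is an equation of remainders, so that the kernel refutes most cases without
-- evaluating the other two powers.
lemma pow_sub_one_congruence_table : ∀ q ∈ range 173, q.Prime → 5 ≤ q → ∀ X ∈ range 81,
    ∀ Y ∈ Ico 1 X, X ^ (q - 1) % q ^ 3 = Y ^ (q - 1) % q ^ 3 → X % q ≠ Y % q →
      10 ≤ X ∧ (X ^ (q - 1) ≡ Y ^ (q - 1) [MOD q ^ 4] → 24 ≤ X) ∧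
        ¬X ^ (q - 1) ≡ Y ^ (q - 1) [MOD q ^ 6] := by
  decide +kernel

lemma bounds_of_pow_dvd_pow_sub_one_sub_pow_sub_one (hr : r.Prime) (hr5 : 5 ≤ r) (hr173 : r < 173)
    (hY : 0 < Y) (h : Y < X) (hX : X ≤ 80) (h_sub : ¬r ∣ X - Y)
    (hk : r ^ k ∣ X ^ (r - 1) - Y ^ (r - 1)) :
    (3 ≤ k → 10 ≤ X) ∧ (4 ≤ k → 24 ≤ X) ∧ k ≤ 5 := by
  have h_modEq : ∀ j ≤ k, X ^ (r - 1) ≡ Y ^ (r - 1) [MOD r ^ j] := fun j hj =>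
    ((Nat.modEq_iff_dvd' (Nat.pow_le_pow_left h.le _)).2 ((pow_dvd_pow r hj).trans hk)).symm
  have h_table := fun hk3 : 3 ≤ k => pow_sub_one_congruence_table r (mem_range.2 hr173) hr hr5 X
    (mem_range.2 (Nat.lt_succ_of_le hX)) Y (mem_Ico.2 ⟨hY, h⟩) (h_modEq 3 hk3)
    fun h_mod => h_sub ((Nat.modEq_iff_dvd' h.le).1 (Nat.ModEq.symm h_mod))
  refine ⟨fun hk3 => (h_table hk3).1, fun hk4 => (h_table (by omega)).2.1 (h_modEq 4 hk4), ?_⟩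
  by_contra! hk6
  exact (h_table (by omega)).2.2 (h_modEq 6 hk6)

end Valuation

namespace ReducedSolution

variable {X Y d z m n q r : ℕ}

lemma left_le (h : ReducedSolution X Y d z m n) {k : ℕ} (hX : d * X ≤ k) : X ≤ k :=
  (Nat.le_mul_of_pos_left X h.scale_pos).trans hX

lemma not_dvd_exponent (h : ReducedSolution X Y d z m n) (hr : r.Prime) (hrm : r ∣ m) : ¬r ∣ n :=
  fun hrn => hr.not_dvd_one (h.exponent_coprime ▸ Nat.dvd_gcd hrm hrn)

lemma card_primesOneMod_le_one (h : ReducedSolution X Y d z m n) (hr : r.Prime) (hrm : r ∣ m)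
    (h_sub : r ∣ X - Y) : #(primesOneMod (scaledSum X Y d z m) r) ≤ 1 := by
  have h_not_dvd := not_dvd_geomSum₂_of_dvd_sub h.coprime h.lt.le hr (h.not_dvd_exponent hr hrm)
    h_sub
  simpa [Nat.factorization_eq_zero_of_not_dvd h_not_dvd] using h.card_primesOneMod_le hr

lemma eulerProd_attachedPrimes_le (h : ReducedSolution X Y d z m n) (hX : d * X ≤ 80)
    (hm : Odd m) (hr : r.Prime) (hrm : r ∣ m) {s : ℕ} (hs : 5 ≤ s) (hs13 : s ≤ 13)
    (hsr : s ≤ r) : eulerProd (attachedPrimes X Y (scaledSum X Y d z m) r) ≤ tailFactor s := by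
  have hr_odd : Odd r := hm.of_dvd_nat hrm
  have h_card := h.card_primesOneMod_le hr
  have h_pow := pow_factorization_geomSum₂_dvd h.coprime h.lt.le hr (h.not_dvd_exponent hr hrm)
  have h_anti : tailFactor r ≤ tailFactor s :=
    tailFactor_antitoneOn (Set.mem_Ici.2 (by omega)) (Set.mem_Ici.2 hr.two_le) hsr
  by_cases h_sub : r ∣ X - Y
  · exact (eulerProd_attachedPrimes_le_tailFactor hr_odd hr.ne_one
      (h.card_primesOneMod_le_one hr hrm h_sub)).trans h_anti
  rw [attachedPrimes_eq_primesOneMod _ h_sub]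
  rcases lt_or_ge r 173 with hr173 | hr173
  · have h_le := (bounds_of_pow_dvd_pow_sub_one_sub_pow_sub_one hr (hs.trans hsr) hr173
      h.right_pos h.lt (h.left_le hX) h_sub h_pow).2.2
    exact (eulerProd_primesOneMod_le hr_odd hr.ne_one (by omega)).trans
      ((progressionProd_six_le_tailFactor (by omega)).trans h_anti)
  · have h_lt := lt_sub_one_of_pow_dvd h.lt ((h.left_le hX).trans_lt (by omega)) hr.two_le h_pow
    have h_thirteen : tailFactor 13 = 9 / 8 := by norm_num [tailFactor_eq]
    calc eulerProd (primesOneMod (scaledSum X Y d z m) r)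
        ≤ progressionProd r r := eulerProd_primesOneMod_le hr_odd hr.ne_one (by omega)
      _ ≤ tailFactor 13 := (progressionProd_self_le (by omega)).trans_eq h_thirteen.symm
      _ ≤ tailFactor s :=
        tailFactor_antitoneOn (Set.mem_Ici.2 (by omega)) (Set.mem_Ici.2 (by omega)) hs13

lemma mul_lt_of_forall_le (h : ReducedSolution X Y d z m n) (hX : d * X ≤ 80) (hm : Odd m)
    (hq : q ∈ m.primeFactors) {s t : ℕ} (hs : 5 ≤ s) (hs13 : s ≤ 13)
    (hs_le : ∀ r ∈ m.primeFactors.erase q, s ≤ r)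
    (ht : #(primesOneMod (scaledSum X Y d z m) q) ≤ t + 1) :
    (d * X : ℚ) < eulerProd (z * d).primeFactors *
      (eulerProd (attachedPrimes X Y (scaledSum X Y d z m) q) * tailFactor s ^ t) := by
  set T := attachedPrimes X Y (scaledSum X Y d z m)
  have h_card : #(m.primeFactors.erase q) ≤ t := by
    rw [card_erase_of_mem hq]
    have := h.card_primeFactors_le_card_primesOneMod hm hq
    omega
  have h_tail : ∏ r ∈ m.primeFactors.erase q, eulerProd (T r) ≤ tailFactor s ^ t := by
    refine (prod_le_prod (g := fun _ => tailFactor s) (fun r _ => (eulerProd_pos _).le)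
      fun r hr => ?_).trans ((prod_const _).trans_le
        (pow_le_pow_right₀ (one_le_tailFactor s) h_card))
    obtain ⟨hr_prime, hrm, -⟩ := Nat.mem_primeFactors.1 (mem_of_mem_erase hr)
    exact h.eulerProd_attachedPrimes_le hX hm hr_prime hrm hs hs13 (hs_le r hr)
  calc (d * X : ℚ) < eulerProd (scaledSum X Y d z m).primeFactors := h.mul_lt_eulerProd
    _ ≤ eulerProd ((z * d).primeFactors ∪ m.primeFactors.biUnion T) :=
        eulerProd_mono h.primeFactors_subset
    _ ≤ eulerProd (z * d).primeFactors * eulerProd (m.primeFactors.biUnion T) :=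
        eulerProd_union_le _ _
    _ ≤ eulerProd (z * d).primeFactors * ∏ r ∈ m.primeFactors, eulerProd (T r) :=
        mul_le_mul_of_nonneg_left (eulerProd_biUnion_le _ _) (eulerProd_pos _).le
    _ = eulerProd (z * d).primeFactors *
          (eulerProd (T q) * ∏ r ∈ m.primeFactors.erase q, eulerProd (T r)) := by
        rw [mul_prod_erase _ (fun r => eulerProd (T r)) hq]
    _ ≤ eulerProd (z * d).primeFactors * (eulerProd (T q) * tailFactor s ^ t) :=
        mul_le_mul_of_nonneg_left (mul_le_mul_of_nonneg_left h_tail (eulerProd_pos _).le)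
          (eulerProd_pos _).le

end ReducedSolution

section SmallSolutions

lemma eulerProd_primeFactors_bounds {a : ℕ} (ha : a ≠ 0) :
    (a < 2 → eulerProd a.primeFactors ≤ 1) ∧ (a < 6 → eulerProd a.primeFactors ≤ 2) ∧
      (a < 30 → eulerProd a.primeFactors ≤ 3) ∧ (a < 210 → eulerProd a.primeFactors ≤ 15 / 4) ∧
        (a < 2310 → eulerProd a.primeFactors ≤ 35 / 8) := by
  have h := fun k => eulerProd_primeFactors_le (n := a) (k := k) ha
  refine ⟨fun h_lt => (h 0 ?_).trans ?_, fun h_lt => (h 1 ?_).trans ?_,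
    fun h_lt => (h 2 ?_).trans ?_, fun h_lt => (h 3 ?_).trans ?_,
    fun h_lt => (h 4 ?_).trans ?_⟩ <;>
  norm_num [prod_range_succ, eulerFactor, Nat.nth_prime_zero_eq_two, Nat.nth_prime_one_eq_three,
    Nat.nth_prime_two_eq_five, Nat.nth_prime_three_eq_seven, Nat.nth_prime_four_eq_eleven, h_lt]

lemma primeFactors_subset_insert_two (N : ℕ) :
    N.primeFactors ⊆ insert 2 (primesOneMod N 2) := by
  intro p hpN
  rcases eq_or_ne p 2 with rfl | hp2
  · exact mem_insert_self _ _
  · exact mem_insert_of_mem <| mem_filter.2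
      ⟨hpN, ((Nat.prime_of_mem_primeFactors hpN).even_sub_one hp2).two_dvd⟩

lemma eulerProd_primesOneMod_two_le {N : ℕ} (h_card : #(primesOneMod N 2) ≤ 1) :
    eulerProd (primesOneMod N 2) ≤ 3 / 2 := by
  rcases card_le_one_iff_subset_singleton.1 h_card with ⟨p, hp⟩
  rcases subset_singleton_iff.1 hp with h_empty | h_singleton
  · norm_num [h_empty, eulerProd]
  · have hpN : p ∈ primesOneMod N 2 := h_singleton ▸ mem_singleton_self p
    have hp3 : 3 ≤ p := by
      have := (Nat.prime_of_mem_primeFactors (mem_filter.1 hpN).1).two_le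
      have := (mem_filter.1 hpN).2
      omega
    calc eulerProd (primesOneMod N 2) = eulerFactor p := by
          rw [h_singleton, eulerProd, prod_singleton]
      _ ≤ eulerFactor 3 :=
          eulerFactor_antitoneOn (by simp) (Set.mem_Ici.2 (by omega)) hp3
      _ = 3 / 2 := by norm_num [eulerFactor]

lemma add_two_le_of_mem_erase_minFac {m r : ℕ} (hm : Odd m)
    (hr : r ∈ m.primeFactors.erase m.minFac) : m.minFac + 2 ≤ r := by
  obtain ⟨hr_ne, hr⟩ := mem_erase.1 hr
  obtain ⟨hr_prime, hrm, -⟩ := Nat.mem_primeFactors.1 hr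
  have h_le := Nat.minFac_le_of_dvd hr_prime.two_le hrm
  obtain ⟨a, ha⟩ := hm.of_dvd_nat (Nat.minFac_dvd m)
  obtain ⟨b, hb⟩ := hm.of_dvd_nat hrm
  omega

lemma eleven_le_of_sq_dvd_three_pow_sub_one {q : ℕ} (hq : 5 ≤ q)
    (h_dvd : q ^ 2 ∣ 3 ^ (q - 1) - 1) : 11 ≤ q := by
  by_contra! h_lt
  interval_cases q <;> norm_num at h_dvd

end SmallSolutions

namespace ReducedSolution

variable {X Y d z m n : ℕ}

lemma factor_mul_scale_ne_zero (h : ReducedSolution X Y d z m n) : z * d ≠ 0 :=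
  (Nat.mul_pos h.factor_pos h.scale_pos).ne'

lemma four_mul_factor_mul_scale_le (h : ReducedSolution X Y d z m n) {k : ℕ} (hX : d * X ≤ k) :
    4 * (z * d) ≤ k ^ 2 := by
  have h_lt := h.lt
  have h_le : z * d ≤ d * (X - 1) * d := Nat.mul_le_mul_right d
    (h.factor_le.trans (Nat.mul_le_mul_left d (Nat.sub_le_sub_left h.right_pos X)))
  refine le_trans ?_ (Nat.pow_le_pow_left hX 2)
  obtain ⟨a, rfl⟩ : ∃ a, X = a + 1 := ⟨X - 1, by omega⟩
  rw [Nat.add_sub_cancel] at h_le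
  calc 4 * (z * d) ≤ 4 * (d * a * d) := Nat.mul_le_mul_left 4 h_le
    _ = 4 * a * 1 * d ^ 2 := by ring
    _ ≤ (a + 1) ^ 2 * d ^ 2 := Nat.mul_le_mul_right _ (four_mul_le_pow_two_add a 1)
    _ = (d * (a + 1)) ^ 2 := by ring

lemma eulerProd_le (h : ReducedSolution X Y d z m n) (hX : d * X ≤ 80) :
    eulerProd (z * d).primeFactors ≤ 35 / 8 ∧
      (d * X ≤ 28 → eulerProd (z * d).primeFactors ≤ 15 / 4) ∧
        (d * X ≤ 10 → eulerProd (z * d).primeFactors ≤ 3) := by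
  obtain ⟨-, -, h30, h210, h2310⟩ := eulerProd_primeFactors_bounds h.factor_mul_scale_ne_zero
  exact ⟨h2310 (by linarith [h.four_mul_factor_mul_scale_le hX]),
    fun hX => h210 (by linarith [h.four_mul_factor_mul_scale_le hX]),
    fun hX => h30 (by linarith [h.four_mul_factor_mul_scale_le hX])⟩

lemma two_le_scale_mul_left (h : ReducedSolution X Y d z m n) : 2 ≤ d * X :=
  (Nat.succ_le_of_lt (Nat.lt_of_le_of_lt h.right_pos h.lt)).trans
    (Nat.le_mul_of_pos_left X h.scale_pos)

lemma scale_le_two (h : ReducedSolution X Y d z m n) (hX : d * X < 6) : d ≤ 2 := by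
  have := h.lt
  have := h.right_pos
  nlinarith

lemma eulerProd_le_two (h : ReducedSolution X Y d z m n) (hX : d * X < 6) :
    eulerProd (z * d).primeFactors ≤ 2 := by
  refine (eulerProd_primeFactors_bounds h.factor_mul_scale_ne_zero).2.1 ?_
  have h_pos := h.scale_pos
  have h_le_two := h.scale_le_two hX
  have h_le := h.factor_le
  have := h.right_pos
  interval_cases d <;> omega

lemma eulerProd_le_one (h : ReducedSolution X Y d z m n) (hX : d * X < 4)
    (h_ne : ¬(X = 3 ∧ Y = 1)) : eulerProd (z * d).primeFactors ≤ 1 := by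
  refine (eulerProd_primeFactors_bounds h.factor_mul_scale_ne_zero).1 ?_
  have h_pos := h.scale_pos
  have h_le_two := h.scale_le_two (by omega)
  have h_le := h.factor_le
  have := h.right_pos
  have := h.lt
  interval_cases d <;> omega

lemma eight_thirds_mul_eulerProd_le (h : ReducedSolution X Y d z m n) (hX : d * X ≤ 80)
    (hX8 : 8 ≤ d * X) : 8 / 3 * eulerProd (z * d).primeFactors ≤ d * X := by
  obtain ⟨h80, h28, h10⟩ := h.eulerProd_le hX
  rw [← Nat.cast_mul]
  rcases le_or_gt (d * X) 10 with h_le | h_gt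
  · have : (8 : ℚ) ≤ (d * X : ℕ) := by exact_mod_cast hX8
    linarith [h10 h_le]
  rcases le_or_gt (d * X) 28 with h_le | h_gt'
  · have : (11 : ℚ) ≤ (d * X : ℕ) := by exact_mod_cast h_gt
    linarith [h28 h_le]
  · have : (29 : ℚ) ≤ (d * X : ℕ) := by exact_mod_cast h_gt'
    linarith

lemma two_mul_eulerProd_le_of_six_le (h : ReducedSolution X Y d z m n) (hX : d * X ≤ 80)
    (hX6 : 6 ≤ d * X) : 2 * eulerProd (z * d).primeFactors ≤ d * X := by
  obtain ⟨h80, -, h10⟩ := h.eulerProd_le hX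
  rw [← Nat.cast_mul]
  rcases le_or_gt (d * X) 10 with h_le | h_gt
  · have : (6 : ℚ) ≤ (d * X : ℕ) := by exact_mod_cast hX6
    linarith [h10 h_le]
  · have : (11 : ℚ) ≤ (d * X : ℕ) := by exact_mod_cast h_gt
    linarith

lemma two_mul_eulerProd_le (h : ReducedSolution X Y d z m n) (hX : d * X ≤ 80)
    (h_ne : ¬(X = 3 ∧ Y = 1)) : 2 * eulerProd (z * d).primeFactors ≤ d * X := by
  rcases le_or_gt 6 (d * X) with h_six | h_six
  · exact h.two_mul_eulerProd_le_of_six_le hX h_six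
  rw [← Nat.cast_mul]
  rcases le_or_gt 4 (d * X) with h_four | h_four
  · have : (4 : ℚ) ≤ (d * X : ℕ) := by exact_mod_cast h_four
    linarith [h.eulerProd_le_two h_six]
  · have : (2 : ℚ) ≤ (d * X : ℕ) := by exact_mod_cast h.two_le_scale_mul_left
    linarith [h.eulerProd_le_one h_four h_ne]

lemma three_halves_mul_eulerProd_le (h : ReducedSolution X Y d z m n) (hX : d * X ≤ 80) :
    3 / 2 * eulerProd (z * d).primeFactors ≤ d * X := by
  by_cases h_eq : X = 3 ∧ Y = 1
  swap
  · linarith [h.two_mul_eulerProd_le hX h_eq, eulerProd_pos (z * d).primeFactors]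
  rcases le_or_gt 6 (d * X) with h_six | h_six
  · linarith [h.two_mul_eulerProd_le_of_six_le hX h_six, eulerProd_pos (z * d).primeFactors]
  · have : (1 : ℚ) ≤ d := by exact_mod_cast h.scale_pos
    rw [h_eq.1]
    push_cast
    linarith [h.eulerProd_le_two h_six]

lemma card_primesOneMod_two_le_one (h : ReducedSolution X Y d z m n) (hm : 2 ∣ m) :
    #(primesOneMod (scaledSum X Y d z m) 2) ≤ 1 := by
  have hn := h.not_dvd_exponent Nat.prime_two hm
  have h_sum : ¬2 ∣ geomSum₂ X Y n := fun h_dvd => by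
    obtain ⟨hX, hY⟩ := not_dvd_of_dvd_pow_sub_pow h.coprime h.lt.le Nat.prime_two
      h.exponent_pos.ne' (dvd_pow_sub_pow_of_dvd_geomSum₂ h.lt.le h_dvd)
    exact not_dvd_geomSum₂_of_dvd_sub h.coprime h.lt.le Nat.prime_two hn (by omega) h_dvd
  simpa [Nat.factorization_eq_zero_of_not_dvd h_sum] using h.card_primesOneMod_le Nat.prime_two

lemma not_two_dvd (h : ReducedSolution X Y d z m n) : ¬2 ∣ m := by
  intro hm
  have h_odd_part := eulerProd_primesOneMod_two_le (h.card_primesOneMod_two_le_one hm)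
  have h_subset := primeFactors_subset_insert_two (scaledSum X Y d z m)
  have h_lt_three : (d * X : ℚ) < 3 := calc
    (d * X : ℚ) < eulerProd (scaledSum X Y d z m).primeFactors := h.mul_lt_eulerProd
    _ ≤ eulerProd ({2} ∪ primesOneMod (scaledSum X Y d z m) 2) := eulerProd_mono h_subset
    _ ≤ eulerProd {2} * eulerProd (primesOneMod (scaledSum X Y d z m) 2) := eulerProd_union_le _ _
    _ ≤ 2 * (3 / 2) := by
      gcongr
      · exact (eulerProd_pos _).le
      · norm_num [eulerProd, eulerFactor]
    _ = 3 := by norm_num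
  obtain ⟨rfl, rfl⟩ : d = 1 ∧ X = 2 := by
    have hX : d * X < 3 := by exact_mod_cast h_lt_three
    have := h.scale_pos
    have := h.lt
    have := h.right_pos
    constructor <;> nlinarith
  obtain rfl : Y = 1 := by
    have := h.lt
    have := h.right_pos
    omega
  obtain rfl : z = 1 := le_antisymm h.factor_le h.factor_pos
  have h_odd : ¬2 ∣ scaledSum 2 1 1 1 m := fun h_dvd => by
    rw [scaledSum, one_mul, mul_one, one_mul] at h_dvd
    exact (not_dvd_of_dvd_pow_sub_pow h.coprime h.lt.le Nat.prime_two h.exponent_ne_zero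
      (dvd_pow_sub_pow_of_dvd_geomSum₂ h.lt.le h_dvd)).1 dvd_rfl
  have h_le := h.mul_lt_eulerProd.trans_le <| eulerProd_mono <|
    (subset_insert_iff_of_notMem fun h_mem => h_odd (Nat.dvd_of_mem_primeFactors h_mem)).1 h_subset
  norm_num at h_le
  linarith

lemma minFac_mem_primeFactors (h : ReducedSolution X Y d z m n) : m.minFac ∈ m.primeFactors :=
  Nat.mem_primeFactors.2 ⟨Nat.minFac_prime (h.exponent_lt.trans_le' h.exponent_pos).ne',
    Nat.minFac_dvd m, h.exponent_ne_zero⟩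

lemma not_minFac_dvd_sub (h : ReducedSolution X Y d z m n) (hX : d * X ≤ 80) (hm : Odd m)
    (hq3 : 3 ≤ m.minFac) : ¬m.minFac ∣ X - Y := by
  intro h_sub
  have hq := Nat.prime_of_mem_primeFactors h.minFac_mem_primeFactors
  have h_card := h.card_primesOneMod_le_one hq (Nat.minFac_dvd m) h_sub
  have h_lt := h.mul_lt_of_forall_le hX hm h.minFac_mem_primeFactors (s := 5) (t := 0) le_rfl
    (by norm_num) (fun r hr => by linarith [add_two_le_of_mem_erase_minFac hm hr]) h_card
  have h_attached := calc
    eulerProd (attachedPrimes X Y (scaledSum X Y d z m) m.minFac)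
    _ ≤ tailFactor m.minFac := eulerProd_attachedPrimes_le_tailFactor
        (hm.of_dvd_nat (Nat.minFac_dvd m)) hq.ne_one h_card
    _ ≤ tailFactor 3 := tailFactor_antitoneOn (by simp) (Set.mem_Ici.2 hq.two_le) hq3
    _ = 7 / 4 := by norm_num [tailFactor_eq]
  have h_ne : ¬(X = 3 ∧ Y = 1) := by
    rintro ⟨rfl, rfl⟩
    have := Nat.le_of_dvd (by norm_num) h_sub
    omega
  rw [pow_zero, mul_one] at h_lt
  nlinarith [h.two_mul_eulerProd_le hX h_ne, eulerProd_pos (z * d).primeFactors]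

lemma mul_lt_of_not_minFac_dvd_sub (h : ReducedSolution X Y d z m n) (hX : d * X ≤ 80)
    (hm : Odd m) (h_sub : ¬m.minFac ∣ X - Y) {q s t : ℕ} (hq : 0 < q) (hq_le : q ≤ m.minFac)
    (hs : 5 ≤ s) (hs13 : s ≤ 13) (hs_le : s ≤ m.minFac + 2)
    (ht : (geomSum₂ X Y n).factorization m.minFac = t) :
    (d * X : ℚ) < eulerProd (z * d).primeFactors *
      (progressionProd q (t + 1) * tailFactor s ^ t) := by
  have hq_prime := Nat.prime_of_mem_primeFactors h.minFac_mem_primeFactors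
  have h_card := ht ▸ h.card_primesOneMod_le hq_prime
  have h_lt := h.mul_lt_of_forall_le hX hm h.minFac_mem_primeFactors hs hs13
    (fun r hr => hs_le.trans (add_two_le_of_mem_erase_minFac hm hr)) h_card
  rw [attachedPrimes_eq_primesOneMod _ h_sub] at h_lt
  refine h_lt.trans_le ?_
  gcongr
  · exact (eulerProd_pos _).le
  · exact pow_nonneg (zero_le_one.trans (one_le_tailFactor s)) t
  · exact (eulerProd_primesOneMod_le (hm.of_dvd_nat (Nat.minFac_dvd m)) hq_prime.ne_one
      h_card).trans (progressionProd_anti hq hq_le _)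

lemma left_le_scale_mul_left (h : ReducedSolution X Y d z m n) : (X : ℚ) ≤ d * X := by
  exact_mod_cast Nat.le_mul_of_pos_left X h.scale_pos

lemma eight_thirds_mul_eulerProd_le_of_nine_dvd (h : ReducedSolution X Y d z m n)
    (hX : d * X ≤ 80) (h_nine : 9 ∣ X + Y) : 8 / 3 * eulerProd (z * d).primeFactors ≤ d * X := by
  rcases le_or_gt 8 (d * X) with h_eight | h_eight
  · exact h.eight_thirds_mul_eulerProd_le hX h_eight
  have h_lt := h.lt
  have h_pos := h.right_pos
  obtain rfl : d = 1 := by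
    have := h.scale_pos
    have : 5 ≤ X := by omega
    nlinarith
  obtain ⟨h_one, h_two, -⟩ := eulerProd_primeFactors_bounds h.factor_mul_scale_ne_zero
  have h_le := h.factor_le
  obtain ⟨rfl, rfl⟩ | ⟨rfl, rfl⟩ | ⟨rfl, rfl⟩ :
      X = 5 ∧ Y = 4 ∨ X = 6 ∧ Y = 3 ∨ X = 7 ∧ Y = 2 := by omega
  · push_cast
    linarith [h_one (by omega)]
  · exact absurd h.coprime (by norm_num)
  · push_cast
    linarith [h_two (by omega)]

lemma minFac_ne_three (h : ReducedSolution X Y d z m n) (hX : d * X ≤ 80) (hm : Odd m) :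
    m.minFac ≠ 3 := by
  intro hq
  have h_sub := h.not_minFac_dvd_sub hX hm hq.ge
  obtain ⟨t, ht⟩ : ∃ t, (geomSum₂ X Y n).factorization m.minFac = t := ⟨_, rfl⟩
  have h_lt := h.mul_lt_of_not_minFac_dvd_sub hX hm h_sub zero_lt_three hq.ge le_rfl
    (by norm_num) (by omega) ht
  have h_dvd : 3 ^ t ∣ X + Y := by
    rw [hq] at h_sub ht
    have h_not_dvd := h.not_dvd_exponent Nat.prime_three (hq ▸ Nat.minFac_dvd m)
    exact pow_dvd_add_of_pow_dvd_sq_sub_sq Nat.prime_three h_sub <|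
      ht ▸ pow_factorization_geomSum₂_dvd h.coprime h.lt.le Nat.prime_three h_not_dvd
  have hXY : 3 ^ t < 2 * X :=
    (Nat.le_of_dvd (Nat.add_pos_left h.left_pos Y) h_dvd).trans_lt (by linarith [h.lt])
  have hX80 := h.left_le hX
  have ht4 : t ≤ 4 := by
    by_contra! ht5
    have := Nat.pow_le_pow_right (by norm_num : 0 < 3) ht5
    omega
  have h_pos := eulerProd_pos (z * d).primeFactors
  obtain ⟨h80, h28, -⟩ := h.eulerProd_le hX
  -- As `t` grows, the lower bound `3 ^ t / 2` for `X` outruns the right-hand side of `h_lt`.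
  interval_cases t <;>
    norm_num [progressionProd, prod_range_succ, eulerFactor, tailFactor_eq] at h_lt
  · linarith [h.three_halves_mul_eulerProd_le hX]
  · linarith [h.two_mul_eulerProd_le hX (by omega)]
  · linarith [h.eight_thirds_mul_eulerProd_le_of_nine_dvd hX h_dvd]
  · rcases le_or_gt (d * X) 28 with h_le | h_gt
    · have : (14 : ℚ) ≤ X := by exact_mod_cast (by omega : 14 ≤ X)
      linarith [h28 h_le, h.left_le_scale_mul_left]
    · have : (29 : ℚ) ≤ d * X := by exact_mod_cast h_gt
      linarith
  · have : (41 : ℚ) ≤ X := by exact_mod_cast (by omega : 41 ≤ X)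
    linarith [h.left_le_scale_mul_left]

lemma le_minFac_of_five_le (h : ReducedSolution X Y d z m n) (hX : d * X ≤ 80) (hm : Odd m)
    (hq5 : 5 ≤ m.minFac) : 173 ≤ m.minFac := by
  by_contra! hq173
  have h_sub := h.not_minFac_dvd_sub hX hm (by omega)
  have hq := Nat.prime_of_mem_primeFactors h.minFac_mem_primeFactors
  obtain ⟨t, ht⟩ : ∃ t, (geomSum₂ X Y n).factorization m.minFac = t := ⟨_, rfl⟩
  have h_lt := h.mul_lt_of_not_minFac_dvd_sub hX hm h_sub (by norm_num) hq5
    (by norm_num : 5 ≤ 7) (by norm_num) (by omega) ht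
  have h_dvd := ht ▸ pow_factorization_geomSum₂_dvd h.coprime h.lt.le hq
    (h.not_dvd_exponent hq (Nat.minFac_dvd m))
  obtain ⟨hX10, hX24, ht5⟩ := bounds_of_pow_dvd_pow_sub_one_sub_pow_sub_one hq hq5 hq173
    h.right_pos h.lt (h.left_le hX) h_sub h_dvd
  have h_large : 4 ≤ t → (24 : ℚ) ≤ d * X := fun h_four =>
    le_trans (by exact_mod_cast hX24 h_four) h.left_le_scale_mul_left
  have h_pos := eulerProd_pos (z * d).primeFactors
  have h_le := (h.eulerProd_le hX).1
  interval_cases t <;>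
    norm_num [progressionProd, prod_range_succ, eulerFactor, tailFactor_eq] at h_lt
  · linarith [h.three_halves_mul_eulerProd_le hX]
  · linarith [h.three_halves_mul_eulerProd_le hX]
  · by_cases h_eq : X = 3 ∧ Y = 1
    · have h_eleven : 11 ≤ m.minFac :=
        eleven_le_of_sq_dvd_three_pow_sub_one hq5 (by simpa [h_eq] using h_dvd)
      have h_lt := h.mul_lt_of_not_minFac_dvd_sub hX hm h_sub (by norm_num) h_eleven
        (by norm_num : 5 ≤ 13) le_rfl (by omega) ht
      norm_num [progressionProd, prod_range_succ, eulerFactor, tailFactor_eq] at h_lt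
      linarith [h.three_halves_mul_eulerProd_le hX]
    · linarith [h.two_mul_eulerProd_le hX h_eq]
  · have : 8 ≤ d * X := le_trans (by omega) (Nat.le_mul_of_pos_left X h.scale_pos)
    linarith [h.eight_thirds_mul_eulerProd_le hX this]
  · linarith [h_large (by norm_num)]
  · linarith [h_large (by norm_num)]

lemma le_minFac (h : ReducedSolution X Y d z m n) (hX : d * X ≤ 80) : 173 ≤ m.minFac := by
  have h_two := h.not_two_dvd
  have hm : Odd m := by rwa [← Nat.not_even_iff_odd, even_iff_two_dvd]
  obtain ⟨a, ha⟩ := hm.of_dvd_nat (Nat.minFac_dvd m)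
  have hq := (Nat.prime_of_mem_primeFactors h.minFac_mem_primeFactors).two_le
  have h_three := h.minFac_ne_three hX hm
  exact h.le_minFac_of_five_le hX hm (by omega)

end ReducedSolution

end TotientQuotient

theorem minFac_ge_173 (x y z m n : ℕ) (hx : 0 < x) (hy : 0 < y) (hz : 0 < z)
    (hm : 0 < m) (hn : 0 < n) (hxy : y < x) (hzxy : z ≤ x - y)
    (hgcd : Nat.gcd m n = 1) (hmn : n < m)
    (heq : Nat.totient (z * ((x ^ m - y ^ m) / (x - y))) =
      z * ((x ^ n - y ^ n) / (x - y)))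
    (hx80 : x ≤ 80) :
    (∀ q : ℕ, q.Prime → q ∣ m → 173 ≤ q) ∧ 173 ≤ m.minFac := by
  rw [← TotientQuotient.geomSum₂_eq_div hxy, ← TotientQuotient.geomSum₂_eq_div hxy] at heq
  obtain ⟨d, X, Y, hd, h_coprime, rfl, rfl⟩ :=
    Nat.exists_coprime' (Nat.gcd_pos_of_pos_left y hx)
  rw [mul_comm X, mul_comm Y] at *
  have h : TotientQuotient.ReducedSolution X Y d z m n :=
    { coprime := h_coprime
      right_pos := Nat.pos_of_mul_pos_left hy
      lt := Nat.lt_of_mul_lt_mul_left hxy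
      scale_pos := hd
      factor_pos := hz
      factor_le := by rwa [Nat.mul_sub]
      exponent_pos := hn
      exponent_lt := hmn
      exponent_coprime := hgcd
      totient_eq := heq }
  have h_minFac := h.le_minFac hx80
  exact ⟨fun q hq hqm => h_minFac.trans (Nat.minFac_le_of_dvd hq.two_le hqm), h_minFac⟩
end
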